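/- arXiv:math/0010020 — 4 statements merged into one kernel-verified Lean document; each statement's English description precedes it below -/
import Mathlib

section
/- Let L be a ℤ-module with a symmetric bilinear form (·,·) and let τ : L → L be an isometry satisfying τ² = τ − 1 (so τ has order 6 and only primitive sixth roots of unity as eigenvalues). Then 2(τx, x) = (x, x) for every x ∈ L. Consequently, making L into an 𝒪-module by letting ω act as τ, the form φ(x,y) := ω(x,y) − (x, τy) is 𝒪-linear in the first variable, satisfies φ(y,x) = −conj(φ(x,y)), and φ(x,x) = (1/2)θ(x,x) for all x, y ∈ L. -/
open Polynomial

noncomputable section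

/-- The Eisenstein ring `𝒪 = ℤ[ω]`, where `ω = e^{2πi/6}` is a primitive sixth root of
unity (so `ω² - ω + 1 = 0`), presented as `ℤ[X]/(X² - X + 1)`. -/
abbrev O : Type := AdjoinRoot (X ^ 2 - X + 1 : ℤ[X])

/-- `ω`, the distinguished primitive sixth root of unity in `𝒪`. -/
def ω : O := AdjoinRoot.root _

lemma ω_sq : ω ^ 2 - ω + 1 = 0 := by
  have h := AdjoinRoot.eval₂_root (X ^ 2 - X + 1 : ℤ[X])
  simpa [ω, eval₂_add, eval₂_sub, eval₂_pow, eval₂_X, eval₂_one] using h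

/-- Complex conjugation on the Eisenstein ring: the ring involution with
`conj ω = 1 - ω = ω⁻¹`. -/
def conj : O →+* O :=
  AdjoinRoot.lift (algebraMap ℤ O) (1 - ω) (by
    have h := ω_sq
    simp only [eval₂_add, eval₂_sub, eval₂_pow, eval₂_X, eval₂_one]
    ring_nf
    ring_nf at h
    linear_combination h)

/-- `θ := ω - ω⁻¹ = ω - conj ω = 2ω - 1`, a square root of `-3` in `𝒪`. -/
def θ : O := ω - conj ω

/-- Let `L` be a ℤ-module with a symmetric bilinear form `B` and
`τ : L → L` an isometry satisfying `τ² = τ − 1`.  Then `2(τx, x) = (x, x)` for all `x`.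
Consequently, for the form `φ(x,y) := ω·(x,y) − (x, τy)` with values in `𝒪` (where the
𝒪-module structure on `L` lets `ω` act as `τ`): `φ` is 𝒪-linear in the first variable
(i.e. additive there and `φ(τx, y) = ω·φ(x,y)`), satisfies `φ(y,x) = −conj(φ(x,y))`, and
`φ(x,x) = ½·θ·(x,x)` (stated denominator-free as `2·φ(x,x) = θ·(x,x)`). -/
theorem statement0 (L : Type*) [AddCommGroup L]
    (B : L → L → ℤ)
    (hB_add_left : ∀ x x' y, B (x + x') y = B x y + B x' y)
    (hB_add_right : ∀ x y y', B x (y + y') = B x y + B x y')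
    (hB_symm : ∀ x y, B x y = B y x)
    (τ : L →+ L)
    (hτ_isom : ∀ x y, B (τ x) (τ y) = B x y)
    (hτ_eq : ∀ x, τ (τ x) = τ x - x) :
    (∀ x, 2 * B (τ x) x = B x x) ∧
    (let φ : L → L → O := fun x y => ω * (B x y : O) - (B x (τ y) : O)
     (∀ x x' y, φ (x + x') y = φ x y + φ x' y) ∧
     (∀ x y, φ (τ x) y = ω * φ x y) ∧
     (∀ x y, φ y x = - conj (φ x y)) ∧
     (∀ x, 2 * φ x x = θ * (B x x : O))) := by
  have key : ∀ x y, B x (τ y) = B x y - B (τ x) y := by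
    intro x y
    have h1 := hτ_isom x (τ y)
    have h2 := hB_add_right (τ x) (τ y - y) y
    rw [sub_add_cancel] at h2
    rw [hτ_eq] at h1
    have h3 := hτ_isom x y
    linarith
  have half : ∀ x, 2 * B (τ x) x = B x x := by
    intro x
    have h1 := key x x
    have h2 := hB_symm x (τ x)
    linarith
  have hw := ω_sq
  have hc : conj ω = 1 - ω := by
    unfold conj
    exact AdjoinRoot.lift_root _
  refine ⟨half, ?_, ?_, ?_, ?_⟩
  · intro x x' y
    simp only [hB_add_left]
    push_cast
    ring
  · intro x y
    simp only [hτ_isom]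
    have h : B (τ x) y = B x y - B x (τ y) := by linarith [key x y]
    rw [h]
    push_cast
    linear_combination (-(B x y : O)) * hw
  · intro x y
    simp only [map_sub, map_mul, map_intCast, hc]
    have h : B y (τ x) = B x y - B x (τ y) := by
      linarith [key x y, hB_symm y (τ x)]
    rw [h, hB_symm y x]
    push_cast
    ring
  · intro x
    have h : ((2 * B (τ x) x : ℤ) : O) = (B x x : O) := by rw [half]
    simp only [θ, hc, hB_symm x (τ x)]
    push_cast at h
    linear_combination -h

end
end

section
/- Let z := r₁ + r₂, a 6-vector of the 𝒪-lattice Λ⁴, and let U(Λ⁴)_z := {g ∈ U(Λ⁴) : g(z) = z}. Then: (i) for every nonzero c ∈ 𝒪, the group U(Λ⁴)_z acts transitively on the set of 3-vectors r of Λ⁴ with ψ(r,z) = c; (ii) the 𝒪-span of the 3-vectors of Λ⁴ perpendicular to z has 𝒪-basis (a, b, c) := (ω²r₁ + r₂, r₁ − θr₂ − 2r₃ + θr₄, r₄), where ψ(a,a) = ψ(b,b) = ψ(c,c) = 3, ψ(a,b) = ψ(a,c) = 0 and ψ(b,c) = θ (so this span is isomorphic to Λ¹ ⊥ Λ²); (iii)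 a 3-vector r perpendicular to z spans together with z a primitive (i.e. saturated) sublattice of Λ⁴ if and only if r lies in the span of b and c, and any two such 3-vectors are in the same U(Λ⁴)_z-orbit. -/
open Polynomial

noncomputable section

/-- The Gram matrix of the 𝒪-lattice `Λᵏ` on its basis `r₁,…,r_k`:
`ψ(rᵢ,rᵢ) = 3`, `ψ(rᵢ,rᵢ₊₁) = θ`, `ψ(rᵢ,rⱼ) = 0` for `j > i+1`, and Hermitian symmetry
(`ψ(rᵢ₊₁,rᵢ) = conj θ`). -/
def gram (k : ℕ) : Fin k → Fin k → O := fun i j =>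
  if i = j then 3
  else if (i : ℕ) + 1 = (j : ℕ) then θ
  else if (j : ℕ) + 1 = (i : ℕ) then conj θ
  else 0

/-- The Hermitian form of `Λᵏ`, modelled on `Fin k → 𝒪` (coordinates with respect to the
basis `r₁,…,r_k`): 𝒪-linear in the first variable, conjugate-linear in the second. -/
def psi (k : ℕ) (x y : Fin k → O) : O :=
  ∑ i : Fin k, ∑ j : Fin k, x i * conj (y j) * gram k i j

/-- `g` belongs to the unitary group `U(Λᵏ)`: an 𝒪-module automorphism of `Λᵏ`
preserving the Hermitian form `ψ`. -/
def IsUnitary (k : ℕ) (g : (Fin k → O) ≃ₗ[O] (Fin k → O)) : Prop :=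
  ∀ x y, psi k (g x) (g y) = psi k x y

/-- The basis vector `rᵢ` of `Λᵏ` (indexing from `0`, so `r k i` is `r_{i+1}`). -/
def r (k : ℕ) (i : Fin k) : Fin k → O := Pi.single i 1

/-- A submodule `M` of an 𝒪-module is primitive (saturated): `M = (ℚ(ω)·M) ∩ L`, i.e.
`a • x ∈ M` with `a ≠ 0` implies `x ∈ M`. -/
def IsPrimitiveSubmodule {V : Type*} [AddCommGroup V] [Module O V]
    (M : Submodule O V) : Prop :=
  ∀ (a : O) (x : V), a ≠ 0 → a • x ∈ M → x ∈ M

namespace Aux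

/-- The element `p + q ω`. -/
def e (p q : ℤ) : O := (p : O) + (q : O) * ω

lemma w2 : ω ^ 2 = ω - 1 := by linear_combination ω_sq

lemma conj_w : conj ω = 1 - ω := by
  simp [conj, ω, AdjoinRoot.lift_root]

lemma theta_eq : θ = 2 * ω - 1 := by
  rw [θ, conj_w]; ring

lemma conj_theta : conj θ = -θ := by
  rw [theta_eq, map_sub, map_mul, conj_w, map_one, map_ofNat]; ring

lemma e_add (p q s t : ℤ) : e p q + e s t = e (p + s) (q + t) := by
  simp only [e]; push_cast; ring

lemma e_sub (p q s t : ℤ) : e p q - e s t = e (p - s) (q - t) := by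
  simp only [e]; push_cast; ring

lemma e_neg (p q : ℤ) : - e p q = e (-p) (-q) := by
  simp only [e]; push_cast; ring

lemma e_mul (p q s t : ℤ) : e p q * e s t = e (p * s - q * t) (p * t + q * s + q * t) := by
  simp only [e]; push_cast; linear_combination (q : O) * t * w2

lemma e_conj (p q : ℤ) : conj (e p q) = e (p + q) (-q) := by
  simp only [e, map_add, map_mul, map_intCast, conj_w]; push_cast; ring

lemma e_theta : θ = e (-1) 2 := by
  rw [theta_eq]; simp only [e]; push_cast; ring

lemma e_w : ω = e 0 1 := by simp [e]

lemma e_zero : (0 : O) = e 0 0 := by simp [e]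

lemma e_one : (1 : O) = e 1 0 := by simp [e]

lemma e_two : (2 : O) = e 2 0 := by simp [e]

lemma e_three : (3 : O) = e 3 0 := by simp [e]

lemma e_surj (x : O) : ∃ p q, x = e p q := by
  induction x using AdjoinRoot.induction_on with
  | ih f =>
    induction f using Polynomial.induction_on' with
    | add f g hf hg =>
      obtain ⟨p, q, h⟩ := hf
      obtain ⟨s, t, h'⟩ := hg
      exact ⟨p + s, q + t, by rw [map_add, h, h', e_add]⟩
    | monomial n c =>
      have hm : AdjoinRoot.mk (X ^ 2 - X + 1 : ℤ[X]) (monomial n c) = (c : O) * ω ^ n := by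
        rw [← C_mul_X_pow_eq_monomial, map_mul, map_pow, AdjoinRoot.mk_X]
        simp [ω]
      rw [hm]
      induction n with
      | zero => exact ⟨c, 0, by simp [e]⟩
      | succ n ih =>
        have hm' : AdjoinRoot.mk (X ^ 2 - X + 1 : ℤ[X]) (monomial n c) = (c : O) * ω ^ n := by
          rw [← C_mul_X_pow_eq_monomial, map_mul, map_pow, AdjoinRoot.mk_X]
          simp [ω]
        obtain ⟨p, q, h⟩ := ih hm'
        exact ⟨_, _, by
          have h7 := e_mul p q 0 1
          rw [← h, ← e_w, mul_assoc, ← pow_succ] at h7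
          exact h7⟩

lemma e_eq_zero {p q : ℤ} (h : e p q = 0) : p = 0 ∧ q = 0 := by
  have hd : (X ^ 2 - X + 1 : ℤ[X]).natDegree = 2 := by compute_degree!
  have hm : (X ^ 2 - X + 1 : ℤ[X]).Monic := by monicity!
  have h1 : AdjoinRoot.mk (X ^ 2 - X + 1 : ℤ[X]) (C p + C q * X) = 0 := by
    rw [map_add, map_mul, AdjoinRoot.mk_X]
    simpa [e, ω] using h
  rw [AdjoinRoot.mk_eq_zero] at h1
  have h2 : (C p + C q * X : ℤ[X]) = 0 := by
    by_contra hne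
    refine hm.not_dvd_of_natDegree_lt hne ?_ h1
    rw [hd]
    have : (C p + C q * X : ℤ[X]).natDegree ≤ 1 := by compute_degree
    omega
  constructor
  · simpa using congrArg (fun f => Polynomial.coeff f 0) h2
  · simpa [coeff_C, -eq_intCast, -map_intCast] using congrArg (fun f => Polynomial.coeff f 1) h2

lemma e_inj {p q s t : ℤ} : e p q = e s t ↔ p = s ∧ q = t := by
  constructor
  · intro h
    have := e_eq_zero (p := p - s) (q := q - t) (by rw [← e_sub, h, sub_self])
    omega
  · rintro ⟨rfl, rfl⟩; rfl

lemma o_domain {x y : O} (h : x * y = 0) : x = 0 ∨ y = 0 := by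
  obtain ⟨p, q, rfl⟩ := e_surj x
  obtain ⟨s, t, rfl⟩ := e_surj y
  have h2 : conj (e p q) * (e p q * e s t) = 0 := by rw [h, mul_zero]
  rw [e_conj, e_mul, e_mul] at h2
  obtain ⟨h3, h4⟩ := e_eq_zero h2
  have h5 : (p ^ 2 + p * q + q ^ 2) * s = 0 := by linear_combination h3
  have h6 : (p ^ 2 + p * q + q ^ 2) * t = 0 := by linear_combination h4
  by_cases hn : p ^ 2 + p * q + q ^ 2 = 0
  · left
    have hq : q = 0 := by nlinarith [sq_nonneg (2 * p + q), sq_nonneg q]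
    have hp : p = 0 := by nlinarith [sq_nonneg (2 * q + p), sq_nonneg p]
    rw [hp, hq, ← e_zero]
  · right
    rw [(mul_eq_zero.1 h5).resolve_left hn, (mul_eq_zero.1 h6).resolve_left hn, ← e_zero]

/-- `psi = θ * phi`. -/
def phi (x y : Fin 4 → O) : O :=
  x 0 * (-θ * conj (y 0) + conj (y 1)) + x 1 * (-θ * conj (y 1) - conj (y 0) + conj (y 2))
    + x 2 * (-θ * conj (y 2) - conj (y 1) + conj (y 3)) + x 3 * (-θ * conj (y 3) - conj (y 2))

lemma th2 : θ * θ = -3 := by rw [theta_eq]; linear_combination 4 * w2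

lemma psi_phi (x y : Fin 4 → O) : psi 4 x y = θ * phi x y := by
  simp only [psi, Fin.sum_univ_four, gram, phi, conj_theta]
  simp
  linear_combination (x 0 * conj (y 0) + (x 1 * conj (y 1)) + (x 2 * conj (y 2))
    + (x 3 * conj (y 3))) * th2

lemma conj_conj (x : O) : conj (conj x) = x := by
  obtain ⟨p, q, rfl⟩ := e_surj x
  rw [e_conj, e_conj]; congr 1 <;> ring

lemma conj_phi (x y : Fin 4 → O) : conj (phi x y) = - phi y x := by
  simp only [phi, map_add, map_sub, map_mul, map_neg, conj_conj, conj_theta]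
  ring

lemma phi_add (x x' y : Fin 4 → O) : phi (x + x') y = phi x y + phi x' y := by
  simp only [phi, Pi.add_apply]; ring

lemma phi_smul (k : O) (x y : Fin 4 → O) : phi (k • x) y = k * phi x y := by
  simp only [phi, Pi.smul_apply, smul_eq_mul]; ring

lemma phi_add' (x y y' : Fin 4 → O) : phi x (y + y') = phi x y + phi x y' := by
  simp only [phi, Pi.add_apply, map_add]; ring

lemma phi_smul' (k : O) (x y : Fin 4 → O) : phi x (k • y) = conj k * phi x y := by
  simp only [phi, Pi.smul_apply, smul_eq_mul, map_mul]; ring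

/-- The vector `z`. -/
def zz : Fin 4 → O := r 4 0 + r 4 1

/-- Same orbit under the stabilizer of `z`. -/
def Rel (x y : Fin 4 → O) : Prop :=
  ∃ g : (Fin 4 → O) ≃ₗ[O] (Fin 4 → O), IsUnitary 4 g ∧ g zz = zz ∧ g x = y

lemma Rel.refl (x : Fin 4 → O) : Rel x x :=
  ⟨LinearEquiv.refl _ _, fun _ _ => rfl, rfl, rfl⟩

lemma Rel.symm {x y : Fin 4 → O} (h : Rel x y) : Rel y x := by
  obtain ⟨g, h1, h2, h3⟩ := h
  refine ⟨g.symm, fun x y => ?_, ?_, ?_⟩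
  · rw [← h1]; simp
  · rw [LinearEquiv.symm_apply_eq, h2]
  · rw [LinearEquiv.symm_apply_eq, h3]

lemma Rel.trans {x y w : Fin 4 → O} (h : Rel x y) (h' : Rel y w) : Rel x w := by
  obtain ⟨g, h1, h2, h3⟩ := h
  obtain ⟨g', h1', h2', h3'⟩ := h'
  refine ⟨g.trans g', fun x y => ?_, ?_, ?_⟩
  · exact (h1' _ _).trans (h1 _ _)
  · simp [h2, h2']
  · simp [h3, h3']

lemma Rel.psi_eq {x y : Fin 4 → O} (h : Rel x y) : psi 4 x zz = psi 4 y zz := by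
  obtain ⟨g, h1, h2, rfl⟩ := h
  conv_rhs => rw [← h2]
  rw [h1]

/-- The triflection in `v`. -/
def tri (v : Fin 4 → O) (hv : phi v v = -θ) : (Fin 4 → O) ≃ₗ[O] (Fin 4 → O) where
  toFun x := x + (-(ω * phi x v)) • v
  invFun x := x + ((1 - ω) * phi x v) • v
  map_add' x y := by
    funext i; simp only [phi_add, Pi.add_apply, Pi.smul_apply, smul_eq_mul]; ring
  map_smul' k x := by
    funext i
    simp only [phi_smul, Pi.add_apply, Pi.smul_apply, smul_eq_mul, RingHom.id_apply]; ring
  left_inv x := by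
    funext i
    simp only [phi_add, phi_smul, hv, Pi.add_apply, Pi.smul_apply, smul_eq_mul, theta_eq]
    linear_combination (-2 * ω * phi x v * v i + phi x v * v i) * w2
  right_inv x := by
    funext i
    simp only [phi_add, phi_smul, hv, Pi.add_apply, Pi.smul_apply, smul_eq_mul, theta_eq]
    linear_combination (-2 * ω * phi x v * v i + phi x v * v i) * w2

lemma tri_rel (v : Fin 4 → O) (hv : phi v v = -θ) (hz : phi zz v = 0) (x : Fin 4 → O) :
    Rel x (x + (-(ω * phi x v)) • v) := by
  refine ⟨tri v hv, fun x y => ?_, ?_, rfl⟩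
  · change psi 4 (x + (-(ω * phi x v)) • v) (y + (-(ω * phi y v)) • v) = _
    have := conj_phi y v
    simp only [psi_phi, phi_add, phi_add', phi_smul, phi_smul', hv, map_neg, map_mul, conj_w,
      this, theta_eq]
    linear_combination (phi x v * phi v y * (2 * ω - 1) * (1 - 2 * ω)) * w2
  · change zz + (-(ω * phi zz v)) • v = zz
    rw [hz]; simp

/-- Integer coordinates of a vector. -/
abbrev K : Type := ℤ × ℤ × ℤ × ℤ × ℤ × ℤ × ℤ × ℤ

/-- The vector with given integer coordinates. -/
def T : K → Fin 4 → O := fun ⟨p0, q0, p1, q1, p2, q2, p3, q3⟩ =>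
  ![e p0 q0, e p1 q1, e p2 q2, e p3 q3]

lemma T_surj (x : Fin 4 → O) : ∃ k, x = T k := by
  obtain ⟨p0, q0, h0⟩ := e_surj (x 0)
  obtain ⟨p1, q1, h1⟩ := e_surj (x 1)
  obtain ⟨p2, q2, h2⟩ := e_surj (x 2)
  obtain ⟨p3, q3, h3⟩ := e_surj (x 3)
  refine ⟨⟨p0, q0, p1, q1, p2, q2, p3, q3⟩, ?_⟩
  funext i
  fin_cases i <;> simp [T, h0, h1, h2, h3]

/-- Evaluate an integer to a literal before passing it on. -/
def fz (x : ℤ) (k : ℤ → Bool) : Bool :=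
  if x = 0 then k 0 else if x = 1 then k 1 else if x = -1 then k (-1) else
  if x = 2 then k 2 else if x = -2 then k (-2) else k x

lemma fz_eq (x : ℤ) (k : ℤ → Bool) : fz x k = k x := by
  unfold fz; split_ifs <;> simp_all

def fk (x : K) (k : K → Bool) : Bool :=
  fz x.1 fun a0 => fz x.2.1 fun b0 => fz x.2.2.1 fun a1 => fz x.2.2.2.1 fun b1 =>
  fz x.2.2.2.2.1 fun a2 => fz x.2.2.2.2.2.1 fun b2 => fz x.2.2.2.2.2.2.1 fun a3 =>
  fz x.2.2.2.2.2.2.2 fun b3 => k (a0, b0, a1, b1, a2, b2, a3, b3)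

lemma fk_eq (x : K) (k : K → Bool) : fk x k = k x := by
  simp only [fk, fz_eq]

def stA : K → K := fun ⟨p0, q0, p1, q1, p2, q2, p3, q3⟩ =>
  (p0 - (p0 - p1 - q2) - (q0 - q1 + p2 + q2), q0 + (p0 - p1 - q2),
   p1 + (p0 - p1 - q2), q1 + (q0 - q1 + p2 + q2), p2, q2, p3, q3)

def stB : K → K := fun ⟨p0, q0, p1, q1, p2, q2, p3, q3⟩ =>
  (p0 - q3, q0 + (p3 + q3), p1 + (-q3 + 2 * (p3 + q3)), q1 - (-2 * q3 + (p3 + q3)),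
   p2 + 2 * q3, q2 - 2 * (p3 + q3), p3 - (-q3 + 2 * (p3 + q3)), q3 + (-2 * q3 + (p3 + q3)))

def stC : K → K := fun ⟨p0, q0, p1, q1, p2, q2, p3, q3⟩ =>
  (p0, q0, p1, q1, p2, q2, -p3 - q3 + q2, p3 - (p2 + q2))

def va : Fin 4 → O := ω ^ 2 • r 4 0 + r 4 1
def vb : Fin 4 → O := r 4 0 - θ • r 4 1 - (2 : O) • r 4 2 + θ • r 4 3
def vc : Fin 4 → O := r 4 3

lemma zz_eq : zz = ![e 1 0, e 1 0, e 0 0, e 0 0] := by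
  funext i; fin_cases i <;> simp [zz, r, e]

lemma va_eq : va = ![e (-1) 1, e 1 0, e 0 0, e 0 0] := by
  funext i; fin_cases i <;> simp [va, r, e, w2]; ring

lemma vb_eq : vb = ![e 1 0, e 1 (-2), e (-2) 0, e (-1) 2] := by
  funext i; fin_cases i <;> simp [vb, r, e, theta_eq] <;> ring

lemma vc_eq : vc = ![e 0 0, e 0 0, e 0 0, e 1 0] := by
  funext i; fin_cases i <;> simp [vc, r, e]

lemma phi_e (p0 q0 p1 q1 p2 q2 p3 q3 s0 t0 s1 t1 s2 t2 s3 t3 : ℤ) :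
    phi ![e p0 q0, e p1 q1, e p2 q2, e p3 q3] ![e s0 t0, e s1 t1, e s2 t2, e s3 t3] =
    e p0 q0 * (-θ * conj (e s0 t0) + conj (e s1 t1))
    + e p1 q1 * (-θ * conj (e s1 t1) - conj (e s0 t0) + conj (e s2 t2))
    + e p2 q2 * (-θ * conj (e s2 t2) - conj (e s1 t1) + conj (e s3 t3))
    + e p3 q3 * (-θ * conj (e s3 t3) - conj (e s2 t2)) := rfl

lemma relA (k : K) : Rel (T k) (T (stA k)) := by
  obtain ⟨p0, q0, p1, q1, p2, q2, p3, q3⟩ := k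
  have h := tri_rel va
    (by rw [va_eq, phi_e]; simp only [e_theta, e_conj, e_mul, e_add, e_sub, e_neg, e_inj]; norm_num)
    (by rw [va_eq, zz_eq, phi_e]
        simp only [e_zero, e_theta, e_conj, e_mul, e_add, e_sub, e_neg, e_inj]; norm_num)
    (T (p0, q0, p1, q1, p2, q2, p3, q3))
  convert h using 1
  rw [va_eq]
  simp only [T, phi_e]
  funext i
  fin_cases i <;>
    simp [stA, e_w, e_theta, e_conj, e_mul, e_add, e_sub, e_neg, e_inj] <;>
    (try constructor) <;> ring

lemma relB (k : K) : Rel (T k) (T (stB k)) := by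
  obtain ⟨p0, q0, p1, q1, p2, q2, p3, q3⟩ := k
  have h := tri_rel vb
    (by rw [vb_eq, phi_e]; simp only [e_theta, e_conj, e_mul, e_add, e_sub, e_neg, e_inj]; norm_num)
    (by rw [vb_eq, zz_eq, phi_e]
        simp only [e_zero, e_theta, e_conj, e_mul, e_add, e_sub, e_neg, e_inj]; norm_num)
    (T (p0, q0, p1, q1, p2, q2, p3, q3))
  convert h using 1
  rw [vb_eq]
  simp only [T, phi_e]
  funext i
  fin_cases i <;>
    simp [stB, e_w, e_theta, e_conj, e_mul, e_add, e_sub, e_neg, e_inj] <;>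
    (try constructor) <;> ring

lemma relC (k : K) : Rel (T k) (T (stC k)) := by
  obtain ⟨p0, q0, p1, q1, p2, q2, p3, q3⟩ := k
  have h := tri_rel vc
    (by rw [vc_eq, phi_e]; simp only [e_theta, e_conj, e_mul, e_add, e_sub, e_neg, e_inj]; norm_num)
    (by rw [vc_eq, zz_eq, phi_e]
        simp only [e_zero, e_theta, e_conj, e_mul, e_add, e_sub, e_neg, e_inj]; norm_num)
    (T (p0, q0, p1, q1, p2, q2, p3, q3))
  convert h using 1
  rw [vc_eq]
  simp only [T, phi_e]
  funext i
  fin_cases i <;>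
    simp [stC, e_w, e_theta, e_conj, e_mul, e_add, e_sub, e_neg, e_inj] <;>
    (try constructor) <;> ring

/-- Orbit representatives, with distinct products with `z`. -/
def reps : List K :=
  [(0, 0, 0, 0, 0, 0, 1, 0), (0, 0, 0, 0, -1, 0, 0, 0), (0, 0, 0, 0, 0, -1, 0, 0),
   (0, 0, -1, 0, 0, 0, 0, 0), (0, 0, 0, -1, 0, 0, 0, 0), (0, -1, 0, 0, 0, 0, 0, 0),
   (0, 1, 0, 0, 0, 0, 0, 0), (1, 0, 0, 0, 0, 0, 0, 0), (0, 0, 1, 0, 0, 0, 0, 0),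
   (0, 0, 0, 0, 0, 1, 0, 0), (0, 0, 0, 0, 1, 0, 0, 0), (0, 0, 0, -1, -1, 0, 0, 0),
   (0, 0, 0, 0, -1, 1, 0, 0), (0, 0, 0, 0, 1, -1, 0, 0), (0, 0, 0, 1, 1, 0, 0, 0),
   (0, 0, -1, 0, -1, 1, 0, 0), (0, 0, 1, -1, 0, -1, 0, 0), (0, 1, 1, 0, 0, -1, 0, 0),
   (0, 0, 1, 0, 1, -1, 0, 0)]

def eqK (x y : K) : Bool :=
  decide (x.1 = y.1) && decide (x.2.1 = y.2.1) && decide (x.2.2.1 = y.2.2.1) &&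
  decide (x.2.2.2.1 = y.2.2.2.1) && decide (x.2.2.2.2.1 = y.2.2.2.2.1) &&
  decide (x.2.2.2.2.2.1 = y.2.2.2.2.2.1) && decide (x.2.2.2.2.2.2.1 = y.2.2.2.2.2.2.1) &&
  decide (x.2.2.2.2.2.2.2 = y.2.2.2.2.2.2.2)

lemma eqK_eq {x y : K} (h : eqK x y = true) : x = y := by
  simp only [eqK, Bool.and_eq_true, decide_eq_true_eq] at h
  obtain ⟨⟨⟨⟨⟨⟨⟨h1, h2⟩, h3⟩, h4⟩, h5⟩, h6⟩, h7⟩, h8⟩ := h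
  exact Prod.ext h1 (Prod.ext h2 (Prod.ext h3 (Prod.ext h4 (Prod.ext h5 (Prod.ext h6
    (Prod.ext h7 h8))))))

def isRep (k : K) : Bool := reps.any fun w => eqK k w

def hit (k : K) : Bool :=
  isRep k || fk (stA k) fun k1 => isRep k1 || fk (stA k1) isRep

def walk : List Bool → K → Bool
  | [], k => hit k
  | true :: l, k => hit k || fk (stB k) (walk l)
  | false :: l, k => hit k || fk (stC k) (walk l)

lemma isRep_sound {k : K} (h : isRep k = true) : ∃ w ∈ reps, Rel (T k) (T w) := by
  simp only [isRep, List.any_eq_true] at h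
  obtain ⟨w, hw, h⟩ := h
  rw [eqK_eq h]
  exact ⟨w, hw, Rel.refl _⟩

lemma hit_sound {k : K} (h : hit k = true) : ∃ w ∈ reps, Rel (T k) (T w) := by
  simp only [hit, fk_eq, Bool.or_eq_true] at h
  rcases h with h | h | h
  · exact isRep_sound h
  · obtain ⟨w, hw, h⟩ := isRep_sound h
    exact ⟨w, hw, (relA _).trans h⟩
  · obtain ⟨w, hw, h⟩ := isRep_sound h
    exact ⟨w, hw, (relA _).trans ((relA _).trans h)⟩

lemma walk_sound (l : List Bool) : ∀ {k : K}, walk l k = true → ∃ w ∈ reps, Rel (T k) (T w) := by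
  induction l with
  | nil => intro k h; exact hit_sound h
  | cons b l ih =>
    intro k h
    cases b
    · simp only [walk, fk_eq, Bool.or_eq_true] at h
      rcases h with h | h
      · exact hit_sound h
      · obtain ⟨w, hw, h⟩ := ih h
        exact ⟨w, hw, (relC _).trans h⟩
    · simp only [walk, fk_eq, Bool.or_eq_true] at h
      rcases h with h | h
      · exact hit_sound h
      · obtain ⟨w, hw, h⟩ := ih h
        exact ⟨w, hw, (relB _).trans h⟩

/-- A Hamiltonian path in the Cayley graph of the group generated by the triflections
in `b` and `c`. -/
def ham : List Bool :=
  [true, true, false, true, false, false, true, true, false, true, false, false,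
   true, true, false, true, false, false, true, true, false, true, false]

def D1 : K → ℤ := fun ⟨p0, q0, p1, q1, p2, q2, _, _⟩ =>
  2 * p0 - 2 * q0 + 4 * p1 + 2 * q1 + p2 + 2 * q2
def D2 : K → ℤ := fun ⟨p0, q0, p1, q1, p2, q2, _, _⟩ =>
  2 * p0 + 4 * q0 - 2 * p1 + 2 * q1 - 2 * p2 - q2

lemma psi_z (k : K) : psi 4 (T k) zz = e (D1 k) (D2 k) := by
  obtain ⟨p0, q0, p1, q1, p2, q2, p3, q3⟩ := k
  rw [psi_phi, zz_eq]
  simp only [T, phi_e, e_theta, e_conj, e_mul, e_add, e_sub, e_neg, e_inj, D1, D2]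
  constructor <;> ring

lemma reps_inj : ∀ w ∈ reps, ∀ w' ∈ reps, D1 w = D1 w' → D2 w = D2 w' → w = w' := by
  have h : ∀ w ∈ reps, ∀ w' ∈ reps, D1 w = D1 w' → D2 w = D2 w' → eqK w w' = true := by
    decide +kernel
  exact fun w hw w' hw' h1 h2 => eqK_eq (h w hw w' hw' h1 h2)

/-- The test "in the span of `b, c`" (for vectors orthogonal to `z`). -/
def inBC : K → Bool := fun ⟨p0, q0, p1, q1, p2, q2, _, _⟩ =>
  decide (p1 = p0 + 2 * q0) && decide (q1 = -2 * p0 - q0) &&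
  decide (p2 = -2 * p0) && decide (q2 = -2 * q0)

/-- The test "in the span of `a`". -/
def inA : K → Bool := fun ⟨p0, q0, p1, q1, p2, q2, p3, q3⟩ =>
  decide (p0 = - p1 - q1) && decide (q0 = p1) &&
  decide (p2 = 0) && decide (q2 = 0) && decide (p3 = 0) && decide (q3 = 0)

def leaf (k : K) : Bool :=
  if inA k then decide (D1 k = 0) && decide (D2 k = 0) && !(inBC k)
  else walk ham k && (!(decide (D1 k = 0) && decide (D2 k = 0)) || inBC k)

def N (p q : ℤ) : ℤ := p * p + p * q + q * q

def rng : List ℤ := [-2, -1, 0, 1, 2]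

def s1 (p3 q3 : ℤ) : ℤ := 2 * N p3 q3
def s2 (p2 q2 p3 q3 : ℤ) : ℤ := N (-p2 - 2 * q2 + 2 * p3) (2 * p2 + q2 + 2 * q3)
def s3 (p1 q1 p2 q2 : ℤ) : ℤ := N (2 * p1 + p2 + 2 * q2) (2 * q1 - 2 * p2 - q2)
def s4 (p0 q0 p1 q1 : ℤ) : ℤ := 2 * N (-p0 - 2 * q0 + p1) (2 * p0 + q0 + q1)

def check : Bool :=
  rng.all fun p3 => rng.all fun q3 => !(decide (s1 p3 q3 ≤ 6)) ||
  (rng.all fun p2 => rng.all fun q2 => !(decide (s1 p3 q3 + s2 p2 q2 p3 q3 ≤ 6)) ||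
  (rng.all fun p1 => rng.all fun q1 =>
    !(decide (s1 p3 q3 + s2 p2 q2 p3 q3 + s3 p1 q1 p2 q2 ≤ 6)) ||
  (rng.all fun p0 => rng.all fun q0 =>
    !(decide (s1 p3 q3 + s2 p2 q2 p3 q3 + s3 p1 q1 p2 q2 + s4 p0 q0 p1 q1 = 6)) ||
    leaf (p0, q0, p1, q1, p2, q2, p3, q3))))

lemma check_true : check = true := by decide +kernel

lemma N_nonneg (p q : ℤ) : 0 ≤ N p q := by
  unfold N; nlinarith [sq_nonneg (p + q), sq_nonneg p, sq_nonneg q]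

lemma psi_self (p0 q0 p1 q1 p2 q2 p3 q3 : ℤ)
    (h : psi 4 (T (p0, q0, p1, q1, p2, q2, p3, q3)) (T (p0, q0, p1, q1, p2, q2, p3, q3)) = 3) :
    s1 p3 q3 + s2 p2 q2 p3 q3 + s3 p1 q1 p2 q2 + s4 p0 q0 p1 q1 = 6 := by
  rw [psi_phi] at h
  simp only [T, phi_e, e_theta, e_three, e_conj, e_mul, e_add, e_sub, e_neg, e_inj] at h
  obtain ⟨h1, h2⟩ := h
  simp only [s1, s2, s3, s4, N]
  linear_combination 2 * h1

lemma mem_rng {p q : ℤ} (h : N p q ≤ 6) : p ∈ rng ∧ q ∈ rng := by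
  unfold N at h
  have hp : p * p ≤ 8 := by nlinarith [sq_nonneg (2 * q + p)]
  have hq : q * q ≤ 8 := by nlinarith [sq_nonneg (2 * p + q)]
  have h1 : -2 ≤ p := by nlinarith
  have h2 : p ≤ 2 := by nlinarith
  have h3 : -2 ≤ q := by nlinarith
  have h4 : q ≤ 2 := by nlinarith
  constructor
  · interval_cases p <;> simp [rng]
  · interval_cases q <;> simp [rng]

lemma leaf_of (p0 q0 p1 q1 p2 q2 p3 q3 : ℤ)
    (h : psi 4 (T (p0, q0, p1, q1, p2, q2, p3, q3)) (T (p0, q0, p1, q1, p2, q2, p3, q3)) = 3) :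
    leaf (p0, q0, p1, q1, p2, q2, p3, q3) = true := by
  have hs := psi_self _ _ _ _ _ _ _ _ h
  have n1 : 0 ≤ s1 p3 q3 := by unfold s1; linarith [N_nonneg p3 q3]
  have n2 : 0 ≤ s2 p2 q2 p3 q3 := N_nonneg _ _
  have n3 : 0 ≤ s3 p1 q1 p2 q2 := N_nonneg _ _
  have n4 : 0 ≤ s4 p0 q0 p1 q1 := by
    unfold s4; linarith [N_nonneg (-p0 - 2 * q0 + p1) (2 * p0 + q0 + q1)]
  have m3 : N p3 q3 ≤ 6 := by unfold s1 at *; linarith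
  have m2 : N p2 q2 ≤ 6 := by
    have := N_nonneg (-p2 - 2 * q2 + 2 * p3 + p3) (2 * p2 + q2 + 2 * q3 + q3)
    have h' : s1 p3 q3 + s2 p2 q2 p3 q3 ≤ 6 := by linarith
    simp only [s1, s2, N] at *
    nlinarith
  have m1 : N p1 q1 ≤ 6 := by
    have y0 := N_nonneg ((2 * p1 + p2 + 2 * q2) - (-p2 - 2 * q2 + 2 * p3)) ((2 * q1 - 2 * p2 - q2) - (2 * p2 + q2 + 2 * q3))
    have y1 := N_nonneg ((2 * p1 + p2 + 2 * q2) + p3) ((2 * q1 - 2 * p2 - q2) + q3)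
    have y2 := N_nonneg ((-p2 - 2 * q2 + 2 * p3) + p3) ((2 * p2 + q2 + 2 * q3) + q3)
    have h' : s1 p3 q3 + s2 p2 q2 p3 q3 + s3 p1 q1 p2 q2 ≤ 6 := by linarith
    clear hs h n1 n2 n3 n4 m3 m2
    simp only [s1, s2, s3, N] at *
    linarith
  have m0 : N p0 q0 ≤ 6 := by
    have y0 := N_nonneg ((2 * p1 + p2 + 2 * q2) + (-p0 - 2 * q0 + p1)) ((2 * q1 - 2 * p2 - q2) + (2 * p0 + q0 + q1))
    have y1 := N_nonneg ((-p2 - 2 * q2 + 2 * p3) + (-p0 - 2 * q0 + p1)) ((2 * p2 + q2 + 2 * q3) + (2 * p0 + q0 + q1))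
    have y2 := N_nonneg (p3 - (-p0 - 2 * q0 + p1)) (q3 - (2 * p0 + q0 + q1))
    have y3 := N_nonneg ((2 * p1 + p2 + 2 * q2) - (-p2 - 2 * q2 + 2 * p3)) ((2 * q1 - 2 * p2 - q2) - (2 * p2 + q2 + 2 * q3))
    have y4 := N_nonneg ((2 * p1 + p2 + 2 * q2) + p3) ((2 * q1 - 2 * p2 - q2) + q3)
    have y5 := N_nonneg ((-p2 - 2 * q2 + 2 * p3) + p3) ((2 * p2 + q2 + 2 * q3) + q3)
    have h' : s1 p3 q3 + s2 p2 q2 p3 q3 + s3 p1 q1 p2 q2 + s4 p0 q0 p1 q1 ≤ 6 := by linarith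
    clear hs h n1 n2 n3 n4 m3 m2 m1
    simp only [s1, s2, s3, s4, N] at *
    linarith
  have hc := check_true
  simp only [check, List.all_eq_true, Bool.or_eq_true, Bool.not_eq_true', decide_eq_false_iff_not]
    at hc
  have c1 := (hc p3 (mem_rng m3).1 q3 (mem_rng m3).2).resolve_left (by push Not; linarith)
  have c2 := (c1 p2 (mem_rng m2).1 q2 (mem_rng m2).2).resolve_left (by push Not; linarith)
  have c3 := (c2 p1 (mem_rng m1).1 q1 (mem_rng m1).2).resolve_left (by push Not; linarith)
  exact (c3 p0 (mem_rng m0).1 q0 (mem_rng m0).2).resolve_left (by push Not; exact hs)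

lemma mem_bc (k : K) : inBC k = true ↔ T k ∈ Submodule.span O {vb, vc} := by
  obtain ⟨p0, q0, p1, q1, p2, q2, p3, q3⟩ := k
  simp only [inBC, Bool.and_eq_true, decide_eq_true_eq]
  rw [Submodule.mem_span_pair, vb_eq, vc_eq]
  constructor
  · rintro ⟨⟨⟨h1, h2⟩, h3⟩, h4⟩
    refine ⟨e p0 q0, e (p3 + p0 + 2 * q0) (q3 - 2 * p0 - q0), ?_⟩
    funext i
    fin_cases i <;> simp [T, e_mul, e_add, e_inj] <;> constructor <;> linarith
  · rintro ⟨β, γ, h⟩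
    obtain ⟨s, t, rfl⟩ := e_surj β
    obtain ⟨s', t', rfl⟩ := e_surj γ
    have h0 := congrFun h 0
    have h1 := congrFun h 1
    have h2 := congrFun h 2
    simp [T, e_mul, e_add, e_inj] at h0 h1 h2
    omega

lemma mem_a (k : K) (h : inA k = true) : ∃ u : O, T k = u • va := by
  obtain ⟨p0, q0, p1, q1, p2, q2, p3, q3⟩ := k
  simp only [inA, Bool.and_eq_true, decide_eq_true_eq] at h
  obtain ⟨⟨⟨⟨⟨h1, h2⟩, h3⟩, h4⟩, h5⟩, h6⟩ := h
  refine ⟨e p1 q1, ?_⟩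
  rw [va_eq]
  funext i
  fin_cases i <;> simp [T, e_mul, e_inj] <;> constructor <;> linarith

lemma root_cases (x : Fin 4 → O) (hx : psi 4 x x = 3) :
    (psi 4 x zz = 0 ∧ (∃ u : O, x = u • va) ∧ x ∉ Submodule.span O {vb, vc}) ∨
    ((∃ w ∈ reps, Rel x (T w)) ∧ (psi 4 x zz = 0 → x ∈ Submodule.span O {vb, vc})) := by
  obtain ⟨k, rfl⟩ := T_surj x
  have hl : leaf k = true := by
    obtain ⟨p0, q0, p1, q1, p2, q2, p3, q3⟩ := k
    exact leaf_of _ _ _ _ _ _ _ _ hx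
  unfold leaf at hl
  split_ifs at hl with ha
  · left
    simp only [Bool.and_eq_true, decide_eq_true_eq, Bool.not_eq_true'] at hl
    obtain ⟨⟨h1, h2⟩, h3⟩ := hl
    refine ⟨by rw [psi_z, h1, h2, ← e_zero], mem_a k ha, ?_⟩
    rw [← mem_bc, h3]; simp
  · right
    rw [Bool.and_eq_true] at hl
    refine ⟨walk_sound _ hl.1, fun hz => ?_⟩
    rw [psi_z] at hz
    obtain ⟨h1, h2⟩ := e_eq_zero hz
    rw [← mem_bc]
    simpa [h1, h2] using hl.2

lemma rel_of_reps {x x' : Fin 4 → O} (h : ∃ w ∈ reps, Rel x (T w)) (h' : ∃ w ∈ reps, Rel x' (T w))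
    (hz : psi 4 x zz = psi 4 x' zz) : Rel x x' := by
  obtain ⟨w, hw, h⟩ := h
  obtain ⟨w', hw', h'⟩ := h'
  rw [h.psi_eq, h'.psi_eq, psi_z, psi_z, e_inj] at hz
  rw [reps_inj w hw w' hw' hz.1 hz.2] at h
  exact h.trans h'.symm

lemma prim_of_rel {x y : Fin 4 → O} (h : Rel x y)
    (hy : IsPrimitiveSubmodule (Submodule.span O {zz, y})) :
    IsPrimitiveSubmodule (Submodule.span O {zz, x}) := by
  obtain ⟨g, -, h2, rfl⟩ := h
  intro α v hα hv
  obtain ⟨s, t, hst⟩ := Submodule.mem_span_pair.1 hv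
  have := hy α (g v) hα (Submodule.mem_span_pair.2 ⟨s, t, by
    rw [← map_smul g α v, ← hst, map_add, map_smul, map_smul, h2]⟩)
  obtain ⟨s', t', hst'⟩ := Submodule.mem_span_pair.1 this
  refine Submodule.mem_span_pair.2 ⟨s', t', g.injective ?_⟩
  rw [← hst', map_add, map_smul, map_smul, h2]

lemma o_cancel {α x y : O} (hα : α ≠ 0) (h : α * x = α * y) : x = y := by
  have : α * (x - y) = 0 := by rw [mul_sub, h, sub_self]
  exact sub_eq_zero.1 ((o_domain this).resolve_left hα)

lemma prim_c : IsPrimitiveSubmodule (Submodule.span O {zz, vc}) := by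
  intro α v hα hv
  obtain ⟨s, t, h⟩ := Submodule.mem_span_pair.1 hv
  have h0 := congrFun h 0
  have h1 := congrFun h 1
  have h2 := congrFun h 2
  simp [zz, vc, r] at h0 h1 h2
  have h01 : v 0 = v 1 := o_cancel hα (by rw [← h0, ← h1])
  have h02 : v 2 = 0 := (o_domain h2.symm).resolve_left hα
  refine Submodule.mem_span_pair.2 ⟨v 0, v 3, ?_⟩
  funext i
  fin_cases i <;> simp [zz, vc, r, h01, h02]

lemma psi_zero : psi 4 (0 : Fin 4 → O) 0 ≠ 3 := by
  rw [psi_phi]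
  simp only [phi, Pi.zero_apply, map_zero, e_three]
  simp only [mul_zero, zero_mul, add_zero]
  rw [e_zero, Ne, e_inj]; norm_num

lemma not_prim_a (u : O) (hu : u ≠ 0) :
    ¬ IsPrimitiveSubmodule (Submodule.span O {zz, u • va}) := by
  intro hp
  have h1 : va ∈ Submodule.span O {zz, u • va} :=
    hp u va hu (Submodule.subset_span (by simp))
  have h2 : zz ∈ Submodule.span O {zz, u • va} := Submodule.subset_span (by simp)
  have h3 : e 2 (-1) • r 4 0 ∈ Submodule.span O {zz, u • va} := by
    convert Submodule.sub_mem _ h2 h1 using 1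
    rw [zz_eq, va_eq]
    funext i
    fin_cases i <;> simp [r, e_sub, e_inj]
  have h4 := hp _ _ (by rw [e_zero, Ne, e_inj]; norm_num) h3
  obtain ⟨s, t, h⟩ := Submodule.mem_span_pair.1 h4
  have h5 := congrFun h 0
  have h6 := congrFun h 1
  rw [zz_eq, va_eq] at h5 h6
  obtain ⟨m, n, hmn⟩ := e_surj (t * u)
  obtain ⟨m', n', rfl⟩ := e_surj s
  simp [r, ← mul_assoc, hmn, e_mul, e_add] at h5 h6
  rw [e_one, e_inj] at h5
  rw [e_zero, e_inj] at h6
  omega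

lemma prim_iff (x : Fin 4 → O) (hx : psi 4 x x = 3) (hz : psi 4 x zz = 0) :
    (IsPrimitiveSubmodule (Submodule.span O {zz, x}) ∧ x ∈ Submodule.span O {vb, vc} ∧
      ∃ w ∈ reps, Rel x (T w)) ∨
    (¬ IsPrimitiveSubmodule (Submodule.span O {zz, x}) ∧ x ∉ Submodule.span O {vb, vc} ∧
      ∃ u : O, x = u • va) := by
  rcases root_cases x hx with ⟨-, ⟨u, rfl⟩, h⟩ | ⟨⟨w, hw, h⟩, h'⟩
  · right
    refine ⟨not_prim_a u ?_, h, u, rfl⟩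
    rintro rfl
    rw [zero_smul] at hx
    exact psi_zero hx
  · left
    refine ⟨?_, h' hz, w, hw, h⟩
    have h1 := h.psi_eq
    rw [hz, psi_z] at h1
    obtain ⟨h2, h3⟩ := e_eq_zero h1.symm
    have h4 := reps_inj w hw (0, 0, 0, 0, 0, 0, 1, 0) (by simp [reps]) (by rw [h2]; rfl)
      (by rw [h3]; rfl)
    rw [h4] at h
    have h5 : T (0, 0, 0, 0, 0, 0, 1, 0) = vc := by rw [vc_eq]; rfl
    rw [h5] at h
    exact prim_of_rel h prim_c

lemma gram_abc : psi 4 va va = 3 ∧ psi 4 vb vb = 3 ∧ psi 4 vc vc = 3 ∧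
    psi 4 va vb = 0 ∧ psi 4 va vc = 0 ∧ psi 4 vb vc = θ ∧
    psi 4 va zz = 0 ∧ psi 4 vb zz = 0 ∧ psi 4 vc zz = 0 := by
  simp only [psi_phi, va_eq, vb_eq, vc_eq, zz_eq, phi_e, e_zero, e_three, e_theta, e_conj, e_mul,
    e_add, e_sub, e_neg, e_inj]
  norm_num

lemma indep : LinearIndependent O ![va, vb, vc] := by
  rw [Fintype.linearIndependent_iff]
  intro g hg
  rw [Fin.sum_univ_three, va_eq, vb_eq, vc_eq] at hg
  obtain ⟨p0, q0, h0⟩ := e_surj (g 0)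
  obtain ⟨p1, q1, h1⟩ := e_surj (g 1)
  obtain ⟨p2, q2, h2⟩ := e_surj (g 2)
  have k0 := congrFun hg 0
  have k2 := congrFun hg 2
  have k3 := congrFun hg 3
  simp [h0, h1, h2, e_mul, e_add] at k0 k2 k3
  have k0 := e_eq_zero k0
  have k2 := e_eq_zero k2
  have k3 := e_eq_zero k3
  have : p0 = 0 ∧ q0 = 0 ∧ p1 = 0 ∧ q1 = 0 ∧ p2 = 0 ∧ q2 = 0 := by omega
  obtain ⟨rfl, rfl, rfl, rfl, rfl, rfl⟩ := this
  rw [← e_zero] at h0 h1 h2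
  intro i
  fin_cases i
  · exact h0
  · exact h1
  · exact h2

lemma span_eq : Submodule.span O {x : Fin 4 → O | psi 4 x x = 3 ∧ psi 4 x zz = 0} =
    Submodule.span O {va, vb, vc} := by
  obtain ⟨h1, h2, h3, -, -, -, h4, h5, h6⟩ := gram_abc
  apply le_antisymm
  · rw [Submodule.span_le]
    rintro x ⟨hx, hz⟩
    rcases prim_iff x hx hz with ⟨-, h, -⟩ | ⟨-, -, u, rfl⟩
    · refine Submodule.span_mono ?_ h
      intro y hy
      simp only [Set.mem_insert_iff, Set.mem_singleton_iff] at hy ⊢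
      tauto
    · exact Submodule.smul_mem _ _ (Submodule.subset_span (by simp))
  · apply Submodule.span_mono
    rintro x (rfl | rfl | rfl)
    · exact ⟨h1, h4⟩
    · exact ⟨h2, h5⟩
    · exact ⟨h3, h6⟩

end Aux


/-- Let `z := r₁ + r₂`, a 6-vector of `Λ⁴`, and `U(Λ⁴)_z` its stabilizer.
(i) For every nonzero `c ∈ 𝒪`, `U(Λ⁴)_z` acts transitively on the 3-vectors `x` with
`ψ(x,z) = c`.  (ii) The 𝒪-span of the 3-vectors perpendicular to `z` has 𝒪-basis
`(a,b,c) = (ω²r₁ + r₂, r₁ − θr₂ − 2r₃ + θr₄, r₄)` with `ψ(a,a) = ψ(b,b) = ψ(c,c) = 3`,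
`ψ(a,b) = ψ(a,c) = 0`, `ψ(b,c) = θ` (so this span is `Λ¹ ⊥ Λ²`).  (iii) A 3-vector `x`
perpendicular to `z` spans with `z` a primitive sublattice iff `x` lies in the span of
`b` and `c`; any two such are in the same `U(Λ⁴)_z`-orbit. -/
theorem statement4 :
    let z : Fin 4 → O := r 4 0 + r 4 1
    let a : Fin 4 → O := ω ^ 2 • r 4 0 + r 4 1
    let b : Fin 4 → O := r 4 0 - θ • r 4 1 - (2 : O) • r 4 2 + θ • r 4 3
    let c : Fin 4 → O := r 4 3
    -- (i)
    (∀ d : O, d ≠ 0 → ∀ x x' : Fin 4 → O,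
      psi 4 x x = 3 → psi 4 x z = d → psi 4 x' x' = 3 → psi 4 x' z = d →
      ∃ g : (Fin 4 → O) ≃ₗ[O] (Fin 4 → O), IsUnitary 4 g ∧ g z = z ∧ g x = x') ∧
    -- (ii)
    (Submodule.span O {x : Fin 4 → O | psi 4 x x = 3 ∧ psi 4 x z = 0} =
        Submodule.span O {a, b, c} ∧
      LinearIndependent O ![a, b, c] ∧
      psi 4 a a = 3 ∧ psi 4 b b = 3 ∧ psi 4 c c = 3 ∧
      psi 4 a b = 0 ∧ psi 4 a c = 0 ∧ psi 4 b c = θ) ∧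
    -- (iii)
    (∀ x : Fin 4 → O, psi 4 x x = 3 → psi 4 x z = 0 →
      (IsPrimitiveSubmodule (Submodule.span O {z, x}) ↔ x ∈ Submodule.span O {b, c})) ∧
    (∀ x x' : Fin 4 → O,
      psi 4 x x = 3 → psi 4 x z = 0 → IsPrimitiveSubmodule (Submodule.span O {z, x}) →
      psi 4 x' x' = 3 → psi 4 x' z = 0 → IsPrimitiveSubmodule (Submodule.span O {z, x'}) →
      ∃ g : (Fin 4 → O) ≃ₗ[O] (Fin 4 → O), IsUnitary 4 g ∧ g z = z ∧ g x = x') := by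
  intro z a b c
  obtain ⟨g1, g2, g3, g4, g5, g6, -, -, -⟩ := Aux.gram_abc
  refine ⟨?_, ⟨Aux.span_eq, Aux.indep, g1, g2, g3, g4, g5, g6⟩, ?_, ?_⟩
  · intro d hd x x' hx hz hx' hz'
    rcases Aux.root_cases x hx with ⟨h, -, -⟩ | ⟨h, -⟩
    · exact absurd (hz.symm.trans h) hd
    rcases Aux.root_cases x' hx' with ⟨h', -, -⟩ | ⟨h', -⟩
    · exact absurd (hz'.symm.trans h') hd
    exact Aux.rel_of_reps h h' (hz.trans hz'.symm)
  · intro x hx hz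
    rcases Aux.prim_iff x hx hz with ⟨h1, h2, -⟩ | ⟨h1, h2, -⟩
    · exact ⟨fun _ => h2, fun _ => h1⟩
    · exact ⟨fun h => absurd h h1, fun h => absurd h h2⟩
  · intro x x' hx hz hp hx' hz' hp'
    rcases Aux.prim_iff x hx hz with ⟨-, -, h⟩ | ⟨h, -, -⟩
    · rcases Aux.prim_iff x' hx' hz' with ⟨-, -, h'⟩ | ⟨h', -, -⟩
      · exact Aux.rel_of_reps h h' (hz.trans hz'.symm)
      · exact absurd hp' h'
    · exact absurd hp h


end
end

section
/- Let z be a 6-vector of the 𝒪-lattice Λ⁴. Then there are exactly 8 three-vectors r of Λ⁴ such that z − r is also a 3-vector and ψ(r, z − r) = 0; equivalently, z can be written in exactly 4 distinct ways as an unordered sum of two mutually perpendicular 3-vectors. For z = r₁ + r₂ these four decompositions are z = (z − r) + r with r ∈ { ω r₂ + r₃, ω r₂ + r₃ + ω⁻¹ r₄, ω r₂ + r₃ + ω⁻² r₄, ω r₁ + 2r₂ − θ r₃ − r₄ }. -/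
open Polynomial

noncomputable section

abbrev EE := ℤ × ℤ
abbrev E4 := EE × EE × EE × EE
namespace EE4
def mul (x y : EE) : EE := (x.1*y.1 - x.2*y.2, x.1*y.2 + x.2*y.1 + x.2*y.2)
def cj (x : EE) : EE := (x.1 + x.2, -x.2)
def nm (x : EE) : ℤ := x.1*x.1 + x.1*x.2 + x.2*x.2
/-- standard Hermitian product -/
def hm (v u : E4) : EE :=
  mul v.1 (cj u.1) + mul v.2.1 (cj u.2.1) + mul v.2.2.1 (cj u.2.2.1) + mul v.2.2.2 (cj u.2.2.2)
def sc (e : EE) (u : E4) : E4 := (mul e u.1, mul e u.2.1, mul e u.2.2.1, mul e u.2.2.2)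
def units : List EE := [(1,0),(0,1),(-1,1),(-1,0),(0,-1),(1,-1)]
def ph : List EE := [(1,0),(-1,1),(0,-1)]
def axes : List E4 := [((-1,2),0,0,0),(0,(-1,2),0,0),(0,0,(-1,2),0),(0,0,0,(-1,2))]
def wd1 (i j : EE) : E4 := ((1,0),i,j,0)
def wd2 (i j : EE) : E4 := (0,(-1,0),i,j)
def wd3 (i j : EE) : E4 := ((1,0),0,-i,j)
def wd4 (i j : EE) : E4 := ((1,0),-i,0,-j)
def wl (f : EE → EE → E4) : List E4 := ph.flatMap fun i => ph.map fun j => f i j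
def L40 : List E4 := axes ++ (wl wd1 ++ (wl wd2 ++ (wl wd3 ++ wl wd4)))
def roots : List E4 := L40.flatMap fun x => units.map fun e => sc e x
/-- basis coordinates to standard coordinates -/
def toU (e : E4) : E4 :=
  (mul (-1,2) e.1 + e.2.1, e.2.1 - mul (-1,2) e.2.2.1 - e.2.2.2, e.2.1 + e.2.2.2, e.2.2.2)
/-- division by theta -/
def dvt (x : EE) : EE := ((x.1*1 + x.2*2)/3, (-2*x.1 - x.2)/3)
def ofU (u : E4) : E4 :=
  (dvt (u.1 - (u.2.2.1 - u.2.2.2)), u.2.2.1 - u.2.2.2,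
   dvt ((u.2.2.1 - u.2.2.2) - u.2.2.2 - u.2.1), u.2.2.2)

def c13 : List EE := [(0,0),(1,0),(0,1),(-1,1),(-1,0),(0,-1),(1,-1),
  (1,1),(-1,2),(-2,1),(-1,-1),(1,-2),(2,-1)]

lemma nm_nonneg (x : EE) : 0 ≤ nm x := by
  unfold nm; nlinarith [sq_nonneg (x.1+x.2), sq_nonneg x.1, sq_nonneg x.2]

lemma mem_c13 (x : EE) (h : nm x ≤ 3) : x ∈ c13 := by
  obtain ⟨a, b⟩ := x
  simp only [nm] at h
  have h1 : a ≤ 2 := by nlinarith [sq_nonneg (a+2*b)]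
  have h2 : -2 ≤ a := by nlinarith [sq_nonneg (a+2*b)]
  have h3 : b ≤ 2 := by nlinarith [sq_nonneg (2*a+b)]
  have h4 : -2 ≤ b := by nlinarith [sq_nonneg (2*a+b)]
  interval_cases a <;> interval_cases b <;> first | (exfalso; omega) | decide

lemma nodup_roots : roots.Nodup := by decide +kernel
lemma roots_toU : ∀ u ∈ roots, toU (ofU u) = u ∧ hm u u = (3,0) := by decide +kernel
/-- glue condition -/
def glue (u : E4) : Bool :=
  (((u.1.1 - u.1.2) - (u.2.2.1.1 - u.2.2.1.2) + (u.2.2.2.1 - u.2.2.2.2)) % 3 == 0) &&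
  (((u.2.1.1 - u.2.1.2) - (u.2.2.1.1 - u.2.2.1.2) - (u.2.2.2.1 - u.2.2.2.2)) % 3 == 0)
lemma glue_toU (e : E4) : glue (toU e) = true := by
  obtain ⟨⟨a,a'⟩,⟨b,b'⟩,⟨c,c'⟩,⟨d,d'⟩⟩ := e
  simp [glue, toU, mul]
  omega
lemma enum0 : ∀ a ∈ c13, ∀ b ∈ c13, nm a + nm b ≤ 3 → ∀ c ∈ c13, nm a + nm b + nm c ≤ 3 →
   ∀ d ∈ c13, nm a + nm b + nm c + nm d = 3 → glue (a,b,c,d) = true → (a,b,c,d) ∈ roots := by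
  decide +kernel
lemma hm_self (u : E4) : hm u u = (nm u.1 + nm u.2.1 + nm u.2.2.1 + nm u.2.2.2, 0) := by
  obtain ⟨⟨a,a'⟩,⟨b,b'⟩,⟨c,c'⟩,⟨d,d'⟩⟩ := u
  ext <;> simp [hm, nm, mul, cj] <;> ring
lemma enum (e : E4) (h : hm (toU e) (toU e) = (3,0)) : toU e ∈ roots := by
  have hg := glue_toU e
  generalize toU e = u at *
  rw [hm_self] at h
  have h := congrArg Prod.fst h
  obtain ⟨a,b,c,d⟩ := u
  simp only at h
  have := nm_nonneg a
  have := nm_nonneg b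
  have := nm_nonneg c
  have := nm_nonneg d
  exact enum0 a (mem_c13 _ (by omega)) b (mem_c13 _ (by omega)) (by omega) c (mem_c13 _ (by omega))
    (by omega) d (mem_c13 _ (by omega)) h hg
lemma toU_inj : Function.Injective toU := by
  rintro ⟨⟨a,a'⟩,⟨b,b'⟩,⟨c,c'⟩,⟨d,d'⟩⟩ ⟨⟨x,x'⟩,⟨y,y'⟩,⟨z,z'⟩,⟨w,w'⟩⟩ h
  simp [toU, mul] at h ⊢
  omega

/-! counting -/
lemma cnt_line (w : EE) (h3 : (w.1 - w.2) % 3 = 0) (h18 : nm w ≤ 18) :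
    162 * ((units.countP fun e => decide (mul w (cj e) = (3,0)) : ℕ) : ℤ)
      = -(nm w ^ 3 - 15 * nm w ^ 2 + 36 * nm w) := by
  obtain ⟨a, b⟩ := w
  simp only [nm] at h18 h3 ⊢
  have h1 : a ≤ 4 := by nlinarith [sq_nonneg (a+2*b)]
  have h2 : -4 ≤ a := by nlinarith [sq_nonneg (a+2*b)]
  have h3' : b ≤ 4 := by nlinarith [sq_nonneg (2*a+b)]
  have h4 : -4 ≤ b := by nlinarith [sq_nonneg (2*a+b)]
  interval_cases a <;> interval_cases b <;> first | (exfalso; omega) | decide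
lemma hm_sc (v x : E4) (e : EE) : hm v (sc e x) = mul (hm v x) (cj e) := by
  obtain ⟨⟨a,a'⟩,⟨b,b'⟩,⟨c,c'⟩,⟨d,d'⟩⟩ := v
  obtain ⟨⟨x,x'⟩,⟨y,y'⟩,⟨z,z'⟩,⟨w,w'⟩⟩ := x
  ext <;> simp [hm, sc, mul, cj] <;> ring
lemma nm_mul (x y : EE) : nm (mul x y) = nm x * nm y := by
  simp [nm, mul]; ring
lemma nm_cj (x : EE) : nm (cj x) = nm x := by
  simp [nm, cj]; ring
lemma L40_glue : ∀ x ∈ L40, glue x = true ∧ hm x x = (3,0) := by decide +kernel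
lemma cs2 (x y : EE) : 0 ≤ nm x + nm y + nm (x + y) := by
  have := nm_nonneg x
  have := nm_nonneg y
  have := nm_nonneg (x+y)
  omega
/-- Cauchy-Schwarz via Lagrange -/
lemma cs (v x : E4) : nm (hm v x) ≤ (hm v v).1 * (hm x x).1 := by
  have key : (hm v v).1 * (hm x x).1 - nm (hm v x) =
     nm (mul v.1 x.2.1 - mul v.2.1 x.1) + nm (mul v.1 x.2.2.1 - mul v.2.2.1 x.1)
     + nm (mul v.1 x.2.2.2 - mul v.2.2.2 x.1) + nm (mul v.2.1 x.2.2.1 - mul v.2.2.1 x.2.1)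
     + nm (mul v.2.1 x.2.2.2 - mul v.2.2.2 x.2.1) + nm (mul v.2.2.1 x.2.2.2 - mul v.2.2.2 x.2.2.1) := by
    obtain ⟨⟨a,a'⟩,⟨b,b'⟩,⟨c,c'⟩,⟨d,d'⟩⟩ := v
    obtain ⟨⟨x,x'⟩,⟨y,y'⟩,⟨z,z'⟩,⟨w,w'⟩⟩ := x
    simp [hm, mul, cj, nm]; ring
  have := nm_nonneg (mul v.1 x.2.1 - mul v.2.1 x.1)
  have := nm_nonneg (mul v.1 x.2.2.1 - mul v.2.2.1 x.1)
  have := nm_nonneg (mul v.1 x.2.2.2 - mul v.2.2.2 x.1)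
  have := nm_nonneg (mul v.2.1 x.2.2.1 - mul v.2.2.1 x.2.1)
  have := nm_nonneg (mul v.2.1 x.2.2.2 - mul v.2.2.2 x.2.1)
  have := nm_nonneg (mul v.2.2.1 x.2.2.2 - mul v.2.2.2 x.2.2.1)
  linarith

lemma L40_div (v : E4) (hv : glue v = true) : ∀ x ∈ L40, ((hm v x).1 - (hm v x).2) % 3 = 0 := by
  obtain ⟨⟨a,a'⟩,⟨b,b'⟩,⟨c,c'⟩,⟨d,d'⟩⟩ := v
  simp [glue] at hv
  simp only [L40, wl, ph, axes, wd1, wd2, wd3, wd4, List.flatMap_cons, List.flatMap_nil, List.map_cons, List.map_nil,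
    List.cons_append, List.nil_append, List.append_nil, List.forall_mem_cons, hm, mul, cj]
  simp
  omega

def tr (p q : EE) : ℤ :=
  let w := mul (mul p (mul p p)) (cj (mul q (mul q q)))
  2 * w.1 + w.2
def F (n : ℤ) : ℤ := n ^ 3 - 15 * n ^ 2 + 36 * n
lemma word_sum (p q s : EE) :
    ((ph.flatMap fun i => ph.map fun j => F (nm (p + mul q (cj i) + mul s (cj j)))).sum)
      = 9 * (nm p ^ 3 + nm q ^ 3 + nm s ^ 3 + 9 * (nm p ^ 2 * nm q + nm p ^ 2 * nm s
         + nm q ^ 2 * nm p + nm q ^ 2 * nm s + nm s ^ 2 * nm p + nm s ^ 2 * nm q)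
         + 36 * nm p * nm q * nm s + tr p q + tr p s + tr q s)
        - 135 * (nm p ^ 2 + nm q ^ 2 + nm s ^ 2 + 4 * (nm p * nm q + nm p * nm s + nm q * nm s))
        + 324 * (nm p + nm q + nm s) := by
  obtain ⟨a,a'⟩ := p
  obtain ⟨b,b'⟩ := q
  obtain ⟨c,c'⟩ := s
  simp [ph, F, nm, mul, cj, tr]
  ring
end EE4

namespace EE4
lemma nm_neg (x : EE) : nm (-x) = nm x := by simp [nm]
lemma tr_neg_left (x y : EE) : tr (-x) y = - tr x y := by simp [tr, mul, cj]; ring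
lemma tr_neg_right (x y : EE) : tr x (-y) = - tr x y := by simp [tr, mul, cj]; ring
lemma tr_comm (x y : EE) : tr x y = tr y x := by simp [tr, mul, cj]; ring

lemma wl_sum (v : E4) (f : EE → EE → E4) (p q s : EE)
    (h : ∀ i j, hm v (f i j) = p + mul q (cj i) + mul s (cj j)) :
    ((wl f).map fun x => F (nm (hm v x))).sum =
    ((ph.flatMap fun i => ph.map fun j => F (nm (p + mul q (cj i) + mul s (cj j)))).sum) := by
  simp [wl, List.map_flatMap, h, Function.comp_def]

lemma sumF (v : E4) (hv : hm v v = (6,0)) :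
    (L40.map fun x => F (nm (hm v x))).sum = -1296 := by
  have hn := congrArg Prod.fst hv
  rw [hm_self] at hn
  obtain ⟨a,b,c,d⟩ := v
  simp only at hn
  have h1 := wl_sum (a,b,c,d) wd1 a b c (by
    intro i j; ext <;> simp [hm, wd1, mul, cj])
  have h2 := wl_sum (a,b,c,d) wd2 (-b) c d (by
    intro i j; ext <;> simp [hm, wd2, mul, cj])
  have h3 := wl_sum (a,b,c,d) wd3 a (-c) d (by
    intro i j; ext <;> simp [hm, wd3, mul, cj] <;> ring)
  have h4 := wl_sum (a,b,c,d) wd4 a (-b) (-d) (by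
    intro i j; ext <;> simp [hm, wd4, mul, cj] <;> ring)
  rw [word_sum] at h1 h2 h3 h4
  have h0 : (axes.map fun x => F (nm (hm (a,b,c,d) x))).sum =
      F (3 * nm a) + F (3 * nm b) + F (3 * nm c) + F (3 * nm d) := by
    simp [axes, hm, F, nm, mul, cj]
    ring
  simp only [L40, List.map_append, List.sum_append, h0, h1, h2, h3, h4, nm_neg, tr_neg_left,
    tr_neg_right]
  simp only [F]
  have e : nm d = 6 - nm a - nm b - nm c := by omega
  rw [e]
  ring

lemma count_roots (v : E4) (hg : glue v = true) (hv : hm v v = (6,0)) :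
    (roots.countP fun u => decide (hm v u = (3,0))) = 8 := by
  have key : ∀ l : List E4, (∀ x ∈ l, x ∈ L40) →
      162 * (((l.flatMap fun x => units.map fun e => sc e x).countP
        fun u => decide (hm v u = (3,0)) : ℕ) : ℤ) = -(l.map fun x => F (nm (hm v x))).sum := by
    intro l
    induction l with
    | nil => simp
    | cons x l ih =>
      intro hl
      have ih := ih (fun y hy => hl y (List.mem_cons_of_mem _ hy))
      have hx := hl x List.mem_cons_self
      have hc := cnt_line (hm v x) (L40_div v hg x hx) (by
        have := cs v x
        rw [hv, (L40_glue x hx).2] at this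
        simpa using this)
      rw [List.flatMap_cons, List.countP_append, List.countP_map, List.map_cons, List.sum_cons]
      simp only [Function.comp_def, hm_sc]
      push_cast
      rw [mul_add, hc, ih]
      unfold F
      ring
  have := key L40 (fun _ h => h)
  rw [sumF v hv] at this
  unfold roots
  omega
end EE4
open EE4

lemma conj_ω : conj ω = 1 - ω := by
  simp [conj, ω]

def toO (x : EE) : O := (x.1 : O) + (x.2 : O) * ω

lemma toO_add (x y : EE) : toO (x + y) = toO x + toO y := by
  simp [toO]; ring
lemma toO_sub (x y : EE) : toO (x - y) = toO x - toO y := by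
  simp [toO]; ring
lemma toO_mul (x y : EE) : toO (mul x y) = toO x * toO y := by
  simp [toO, mul]
  linear_combination (-(x.2 : O) * y.2) * ω_sq
lemma toO_cj (x : EE) : toO (cj x) = conj (toO x) := by
  simp [toO, cj, conj_ω]; ring

def phi : O →+* QuadraticAlgebra ℤ (-1) 1 :=
  AdjoinRoot.lift (algebraMap ℤ _) ⟨0, 1⟩ (by
    simp only [eval₂_add, eval₂_sub, eval₂_pow, eval₂_X, eval₂_one]
    ext <;> simp [pow_two, QuadraticAlgebra.re_one, QuadraticAlgebra.im_one])

lemma toO_inj : Function.Injective toO := by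
  intro x y h
  have hω : phi ω = ⟨0, 1⟩ := by simp [phi, ω]
  have h2 := congrArg phi h
  simp only [toO, map_add, map_mul, map_intCast, hω] at h2
  have a := congrArg QuadraticAlgebra.re h2
  have b := congrArg QuadraticAlgebra.im h2
  simp at a b
  exact Prod.ext a b

lemma toO_surj : Function.Surjective toO := by
  intro x
  induction x using AdjoinRoot.induction_on with
  | ih p =>
    induction p using Polynomial.induction_on with
    | C a => exact ⟨(a, 0), by simp [toO]⟩
    | add p q hp hq =>
      obtain ⟨a, ha⟩ := hp
      obtain ⟨b, hb⟩ := hq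
      exact ⟨a + b, by rw [toO_add, ha, hb, map_add]⟩
    | monomial n a h =>
      obtain ⟨b, hb⟩ := h
      refine ⟨mul b (0, 1), ?_⟩
      have e : (C a * X ^ (n + 1) : ℤ[X]) = C a * X ^ n * X := by ring
      rw [toO_mul, hb, e, map_mul]
      simp [toO, ω]

def toL (e : E4) : Fin 4 → O := ![toO e.1, toO e.2.1, toO e.2.2.1, toO e.2.2.2]

lemma toL_inj : Function.Injective toL := by
  intro x y h
  have h0 := congrFun h 0
  have h1 := congrFun h 1
  have h2 := congrFun h 2
  have h3 := congrFun h 3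
  simp only [toL, Matrix.cons_val] at h0 h1 h2 h3
  exact Prod.ext (toO_inj h0) (Prod.ext (toO_inj h1) (Prod.ext (toO_inj h2) (toO_inj h3)))

lemma toL_surj : Function.Surjective toL := by
  intro x
  obtain ⟨a, ha⟩ := toO_surj (x 0)
  obtain ⟨b, hb⟩ := toO_surj (x 1)
  obtain ⟨c, hc⟩ := toO_surj (x 2)
  obtain ⟨d, hd⟩ := toO_surj (x 3)
  refine ⟨(a, b, c, d), ?_⟩
  funext i
  fin_cases i <;> simp [toL, ha, hb, hc, hd]

lemma toL_sub (x y : E4) : toL (x - y) = toL x - toL y := by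
  funext i
  fin_cases i <;> simp [toL, toO_sub]

lemma toO_theta : toO (-1, 2) = 2 * ω - 1 := by simp [toO]; ring

lemma psi_toL (x y : E4) : psi 4 (toL x) (toL y) = toO (hm (toU x) (toU y)) := by
  simp only [hm, toU, toO_add, toO_mul, toO_cj, toO_sub, toO_theta, map_sub, map_add, map_mul,
    map_one, map_ofNat, conj_ω]
  simp [psi, Fin.sum_univ_four, gram, toL, θ, conj_ω]
  have h := ω_sq
  have h' : ω ^ 2 = ω - 1 := by linear_combination h
  ring_nf
  rw [h']
  ring

lemma toO_three : toO (3, 0) = 3 := by simp [toO]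
lemma toO_six : toO (6, 0) = 6 := by simp [toO]
lemma toO_zero : toO (0, 0) = 0 := by simp [toO]

lemma toU_sub (x y : E4) : toU (x - y) = toU x - toU y := by
  ext <;> simp [toU, mul] <;> ring

lemma cond_iff (z x : E4) (hz : hm z z = (6,0)) :
    (hm x x = (3,0) ∧ hm (z - x) (z - x) = (3,0) ∧ hm x (z - x) = (0,0)) ↔
    (hm x x = (3,0) ∧ hm z x = (3,0)) := by
  have e1 : hm x (z - x) = cj (hm z x) - hm x x := by
    ext <;> simp [hm, mul, cj] <;> ring
  have e2 : hm (z - x) (z - x) = hm z z - hm z x - cj (hm z x) + hm x x := by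
    ext <;> simp [hm, mul, cj] <;> ring
  rw [e1, e2, hz]
  constructor
  · rintro ⟨h1, -, h3⟩
    refine ⟨h1, ?_⟩
    rw [h1] at h3
    simp [cj, Prod.ext_iff] at h3 ⊢
    omega
  · rintro ⟨h1, h2⟩
    rw [h1, h2]
    exact ⟨rfl, by decide, by decide⟩

lemma mem_iff (z x : E4) (hz : psi 4 (toL z) (toL z) = 6) :
    (psi 4 (toL x) (toL x) = 3 ∧ psi 4 (toL z - toL x) (toL z - toL x) = 3 ∧
      psi 4 (toL x) (toL z - toL x) = 0) ↔
    (hm (toU x) (toU x) = (3,0) ∧ hm (toU z) (toU x) = (3,0)) := by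
  rw [psi_toL, ← toO_six, toO_inj.eq_iff] at hz
  rw [← cond_iff _ _ hz, ← toL_sub, psi_toL, psi_toL, psi_toL, toU_sub, ← toO_three, ← toO_zero,
    toO_inj.eq_iff, toO_inj.eq_iff, toO_inj.eq_iff]

lemma part1 (z : Fin 4 → O) (hz : psi 4 z z = 6) :
      Set.ncard {x : Fin 4 → O |
        psi 4 x x = 3 ∧ psi 4 (z - x) (z - x) = 3 ∧ psi 4 x (z - x) = 0} = 8 := by
  obtain ⟨z, rfl⟩ := toL_surj z
  have e : {x : Fin 4 → O | psi 4 x x = 3 ∧ psi 4 (toL z - x) (toL z - x) = 3 ∧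
      psi 4 x (toL z - x) = 0} =
      toL '' {x | hm (toU x) (toU x) = (3,0) ∧ hm (toU z) (toU x) = (3,0)} := by
    ext x
    obtain ⟨x, rfl⟩ := toL_surj x
    rw [toL_inj.mem_set_image]
    exact mem_iff z x hz
  rw [e, Set.ncard_image_of_injective _ toL_inj, ← Set.ncard_image_of_injective _ toU_inj]
  have e2 : toU '' {x | hm (toU x) (toU x) = (3,0) ∧ hm (toU z) (toU x) = (3,0)} =
      ((roots.filter fun u => decide (hm (toU z) u = (3,0))).toFinset : Set E4) := by
    ext u
    simp only [Set.mem_image, Set.mem_ofPred_eq, List.coe_toFinset, List.mem_filter,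
      decide_eq_true_eq]
    constructor
    · rintro ⟨x, ⟨h1, h2⟩, rfl⟩
      exact ⟨enum x h1, h2⟩
    · rintro ⟨h1, h2⟩
      obtain ⟨h3, h4⟩ := roots_toU u h1
      exact ⟨ofU u, by rw [h3]; exact ⟨h4, h2⟩, h3⟩
  rw [e2, Set.ncard_coe_finset, List.toFinset_card_of_nodup (nodup_roots.filter _),
    ← List.countP_eq_length_filter]
  rw [psi_toL, ← toO_six, toO_inj.eq_iff] at hz
  exact count_roots _ (glue_toU z) hz

def d1 : E4 := (0, (0,1), (1,0), 0)
def d2 : E4 := (0, (0,1), (1,0), (1,-1))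
def d3 : E4 := (0, (0,1), (1,0), (0,-1))
def d4 : E4 := ((0,1), (2,0), (1,-2), (-1,0))
def z0 : E4 := ((1,0), (1,0), 0, 0)
def dl : Finset E4 := {d1, d2, d3, d4, z0 - d1, z0 - d2, z0 - d3, z0 - d4}

lemma dl_card : dl.card = 8 := by decide +kernel
lemma dl_ok : ∀ x ∈ dl, hm (toU x) (toU x) = (3,0) ∧ hm (toU z0) (toU x) = (3,0) := by
  decide +kernel
lemma hz0 : psi 4 (toL z0) (toL z0) = 6 := by
  rw [psi_toL, ← toO_six]
  congr 1

lemma ω3 : ω ^ 2 = ω - 1 := by linear_combination ω_sq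

lemma z0_eq : r 4 0 + r 4 1 = toL z0 := by
  funext i
  fin_cases i <;> simp [r, toL, z0, toO]
lemma d1_eq : ω • r 4 1 + r 4 2 = toL d1 := by
  funext i
  fin_cases i <;> simp [r, toL, d1, toO]
lemma d2_eq : ω • r 4 1 + r 4 2 + conj ω • r 4 3 = toL d2 := by
  funext i
  fin_cases i <;> simp [r, toL, d2, toO, conj_ω]; ring
lemma d3_eq : ω • r 4 1 + r 4 2 + (conj ω) ^ 2 • r 4 3 = toL d3 := by
  funext i
  fin_cases i <;> simp [r, toL, d3, toO, conj_ω]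
  linear_combination ω_sq
lemma d4_eq : ω • r 4 0 + (2 : O) • r 4 1 - θ • r 4 2 - r 4 3 = toL d4 := by
  funext i
  fin_cases i <;> simp [r, toL, d4, toO, θ, conj_ω]
  ring

/-- Let `z` be a 6-vector of `Λ⁴`.  There are exactly 8 three-vectors `x`
with `z − x` also a 3-vector and `ψ(x, z−x) = 0`; equivalently, `z` is a sum of two
mutually perpendicular 3-vectors in exactly 4 ways (unordered).  For `z = r₁ + r₂` the
four decompositions are `z = (z − x) + x` with
`x ∈ {ωr₂ + r₃, ωr₂ + r₃ + ω⁻¹r₄, ωr₂ + r₃ + ω⁻²r₄, ωr₁ + 2r₂ − θr₃ − r₄}`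
(here `ω⁻¹ = conj ω`). -/
theorem statement5 :
    (∀ z : Fin 4 → O, psi 4 z z = 6 →
      Set.ncard {x : Fin 4 → O |
        psi 4 x x = 3 ∧ psi 4 (z - x) (z - x) = 3 ∧ psi 4 x (z - x) = 0} = 8) ∧
    (let z : Fin 4 → O := r 4 0 + r 4 1
     let a₁ : Fin 4 → O := ω • r 4 1 + r 4 2
     let a₂ : Fin 4 → O := ω • r 4 1 + r 4 2 + conj ω • r 4 3
     let a₃ : Fin 4 → O := ω • r 4 1 + r 4 2 + (conj ω) ^ 2 • r 4 3
     let a₄ : Fin 4 → O := ω • r 4 0 + (2 : O) • r 4 1 - θ • r 4 2 - r 4 3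
     {x : Fin 4 → O |
        psi 4 x x = 3 ∧ psi 4 (z - x) (z - x) = 3 ∧ psi 4 x (z - x) = 0} =
       {a₁, a₂, a₃, a₄, z - a₁, z - a₂, z - a₃, z - a₄}) := by
  refine ⟨part1, ?_⟩
  intro z a₁ a₂ a₃ a₄
  have ez : z = toL z0 := z0_eq
  have e1 : a₁ = toL d1 := d1_eq
  have e2 : a₂ = toL d2 := d2_eq
  have e3 : a₃ = toL d3 := d3_eq
  have e4 : a₄ = toL d4 := d4_eq
  rw [ez, e1, e2, e3, e4]
  have hs : ({toL d1, toL d2, toL d3, toL d4, toL z0 - toL d1, toL z0 - toL d2,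
      toL z0 - toL d3, toL z0 - toL d4} : Set (Fin 4 → O)) = toL '' (dl : Set E4) := by
    simp [dl, Set.image_insert_eq, toL_sub]
  have h8 := part1 (toL z0) hz0
  rw [hs]
  symm
  apply Set.eq_of_subset_of_ncard_le
  · rintro _ ⟨x, hx, rfl⟩
    exact (mem_iff z0 x hz0).2 (dl_ok x hx)
  · rw [h8, Set.ncard_image_of_injective _ toL_inj, Set.ncard_coe_finset, dl_card]
  · exact Set.finite_of_ncard_ne_zero (by rw [h8]; norm_num)

end
end

section
/- Let r be a 3-vector of the 𝒪-lattice Λ⁴ and let U(Λ⁴)_r := {g ∈ U(Λ⁴) : g(r) = r}. Then for every c ∈ 𝒪, the group U(Λ⁴)_r acts transitively on the set of 3-vectors r' of Λ⁴ with ψ(r', r) = c. -/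
open Polynomial

noncomputable section

namespace St

abbrev L : Type := Fin 4 → O

lemma conj_ω : conj ω = 1 - ω := by
  simp [conj, ω]

lemma θ_eq : θ = 2 * ω - 1 := by
  rw [θ, conj_ω]; ring

lemma ω2 : ω * ω = ω - 1 := by linear_combination ω_sq

lemma θ2 : θ * θ = -3 := by
  rw [θ_eq]; linear_combination 4 * ω2

lemma conj_θ : conj θ = -θ := by
  rw [θ_eq, map_sub, map_mul, map_one, conj_ω, map_ofNat]; ring

lemma exists_rep (a : O) : ∃ m n : ℤ, a = m + n * ω := by
  induction a using AdjoinRoot.induction_on with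
  | ih p =>
    induction p using Polynomial.induction_on' with
    | add p q hp hq =>
      obtain ⟨m, n, h⟩ := hp
      obtain ⟨m', n', h'⟩ := hq
      refine ⟨m + m', n + n', ?_⟩
      rw [map_add, h, h']; push_cast; ring
    | monomial k c =>
      induction k with
      | zero =>
        refine ⟨c, 0, ?_⟩
        simp
      | succ k ih =>
        obtain ⟨m, n, h⟩ := ih
        refine ⟨-n, m + n, ?_⟩
        rw [← Polynomial.monomial_mul_X, map_mul, h, AdjoinRoot.mk_X]
        change (_ + _ * ω) * ω = _
        push_cast
        linear_combination (n : O) * ω2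

lemma conj_rep (m n : ℤ) : conj (m + n * ω) = m + n * (1 - ω) := by
  simp [conj_ω]

lemma conj_conj (a : O) : conj (conj a) = a := by
  obtain ⟨m, n, rfl⟩ := exists_rep a
  simp [conj_ω]

/-- reduction mod `θ` -/
def red : O →+* ZMod 3 :=
  AdjoinRoot.lift (Int.castRingHom (ZMod 3)) (-1) (by
    simp only [eval₂_add, eval₂_sub, eval₂_pow, eval₂_X, eval₂_one]
    decide)

lemma red_ω : red ω = -1 := by
  simp [red, ω]

lemma red_θ : red θ = 0 := by
  rw [θ_eq, map_sub, map_mul, map_one, red_ω, map_ofNat]; decide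

lemma red_conj (a : O) : red (conj a) = red a := by
  obtain ⟨m, n, rfl⟩ := exists_rep a
  simp [conj_ω, red_ω]
  have : (3 : ZMod 3) = 0 := by decide
  linear_combination (n : ZMod 3) * this

lemma red_ker (a : O) (h : red a = 0) : ∃ b, a = θ * b := by
  obtain ⟨m, n, rfl⟩ := exists_rep a
  simp [red_ω] at h
  have h' : ((m - n : ℤ) : ZMod 3) = 0 := by push_cast; linear_combination h
  rw [ZMod.intCast_zmod_eq_zero_iff_dvd] at h'
  obtain ⟨k, hk⟩ := h'
  obtain rfl : m = n + 3 * k := by push_cast at hk; linarith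
  refine ⟨n * (1 - ω) - k * θ, ?_⟩
  push_cast
  rw [θ_eq]
  linear_combination (2 * n + 4 * k : O) * ω2

lemma cast_inj (m n : ℤ) (h : (m : O) = n) : m = n := by
  let z : ℂ := (1 + Complex.I * (Real.sqrt 3 : ℂ)) / 2
  have hz : z ^ 2 - z + 1 = 0 := by
    have h3 : ((Real.sqrt 3 : ℝ) : ℂ) ^ 2 = 3 := by
      rw [← Complex.ofReal_pow, Real.sq_sqrt (by norm_num)]; norm_num
    simp only [z]
    linear_combination (1/4 : ℂ) * (Real.sqrt 3 : ℂ) ^ 2 * Complex.I_sq - (1/4 : ℂ) * h3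
  let F : O →+* ℂ := AdjoinRoot.lift (Int.castRingHom ℂ) z (by
    simpa only [eval₂_add, eval₂_sub, eval₂_pow, eval₂_X, eval₂_one] using hz)
  have := congrArg F h
  simpa using this

lemma nrm (m n : ℤ) : ((m : O) + n * ω) * conj (m + n * ω) = ((m * m + m * n + n * n : ℤ) : O) := by
  rw [conj_rep]; push_cast
  linear_combination (- (n : O) * n) * ω2

lemma exists_nrm (a : O) : ∃ k : ℤ, a * conj a = k ∧ 0 ≤ k ∧ (k = 0 → a = 0) := by
  obtain ⟨m, n, rfl⟩ := exists_rep a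
  refine ⟨_, nrm m n, by nlinarith [sq_nonneg (m + n), sq_nonneg m, sq_nonneg n], fun h => ?_⟩
  have hm : m = 0 := by nlinarith [sq_nonneg (m + 2 * n), sq_nonneg m, sq_nonneg n]
  have hn : n = 0 := by nlinarith [sq_nonneg (2 * m + n), sq_nonneg m, sq_nonneg n]
  simp [hm, hn]

lemma nat_cancel (c : ℤ) (hc : c ≠ 0) (a : O) (h : (c : O) * a = 0) : a = 0 := by
  obtain ⟨k, hk, _, hk0⟩ := exists_nrm a
  apply hk0
  have : ((c * k : ℤ) : O) = (0 : ℤ) := by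
    push_cast; rw [← hk]; linear_combination conj a * h
  have := cast_inj _ _ this
  simpa [hc] using this

lemma θ_cancel (a : O) (h : θ * a = 0) : a = 0 := by
  apply nat_cancel 3 (by norm_num)
  push_cast
  linear_combination (-θ) * h + a * θ2

lemma mul_cancel' (a b : O) (h : a * b = 0) : a = 0 ∨ b = 0 := by
  obtain ⟨k, hk, _, hk0⟩ := exists_nrm a
  by_cases h0 : k = 0
  · exact Or.inl (hk0 h0)
  · right
    apply nat_cancel k h0
    rw [← hk]; linear_combination conj a * h

def phi (x y : L) : O :=
  -θ * (x 0 * conj (y 0) + x 1 * conj (y 1) + x 2 * conj (y 2) + x 3 * conj (y 3))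
  + (x 0 * conj (y 1) - x 1 * conj (y 0)) + (x 1 * conj (y 2) - x 2 * conj (y 1))
  + (x 2 * conj (y 3) - x 3 * conj (y 2))

lemma psi_eq (x y : L) : psi 4 x y = θ * phi x y := by
  have g : gram 4 = ![![3, θ, 0, 0], ![-θ, 3, θ, 0], ![0, -θ, 3, θ], ![0, 0, -θ, 3]] := by
    funext i j
    rw [gram, conj_θ]
    fin_cases i <;> fin_cases j <;> rfl
  rw [psi, g, phi]
  simp only [Fin.sum_univ_four, Matrix.cons_val]
  linear_combination (x 0 * conj (y 0) + x 1 * conj (y 1) + x 2 * conj (y 2) + x 3 * conj (y 3)) * θ2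

lemma phi_add (x y z : L) : phi (x + y) z = phi x z + phi y z := by
  simp [phi]; ring
lemma phi_smul (a : O) (y z : L) : phi (a • y) z = a * phi y z := by
  simp [phi]; ring
lemma phi_skew (x y : L) : phi y x = - conj (phi x y) := by
  simp [phi, conj_θ, conj_conj]; ring
lemma phi_add' (x y z : L) : phi z (x + y) = phi z x + phi z y := by
  simp [phi]; ring
lemma phi_smul' (a : O) (y z : L) : phi z (a • y) = conj a * phi z y := by
  simp [phi]; ring

lemma root_iff (x : L) : psi 4 x x = 3 ↔ phi x x = -θ := by
  rw [psi_eq]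
  constructor
  · intro h
    have := θ_cancel (phi x x + θ) (by linear_combination h + θ2)
    linear_combination this
  · intro h
    rw [h]; linear_combination -θ2

lemma sub_conj (a : O) : ∃ n : ℤ, a - conj a = n * θ := by
  obtain ⟨m, n, rfl⟩ := exists_rep a
  refine ⟨n, ?_⟩
  rw [conj_rep, θ_eq]; ring

lemma pos (x : L) : ∃ q : ℤ, phi x x = -θ * q ∧ 0 ≤ q ∧ (q = 0 → x = 0) := by
  obtain ⟨a0, h0, -, z0⟩ := exists_nrm (x 0)
  obtain ⟨a1, h1, -, z1⟩ := exists_nrm (x 1)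
  obtain ⟨a2, h2, -, z2⟩ := exists_nrm (x 2)
  obtain ⟨a3, h3, p3, z3⟩ := exists_nrm (x 3)
  obtain ⟨n0, m0⟩ := sub_conj (x 0 * conj (x 1))
  obtain ⟨n1, m1⟩ := sub_conj (x 1 * conj (x 2))
  obtain ⟨n2, m2⟩ := sub_conj (x 2 * conj (x 3))
  simp only [map_mul, conj_conj] at m0 m1 m2
  obtain ⟨b0, e0, q0, w0⟩ := exists_nrm (3 * x 0 - θ * x 1)
  obtain ⟨b1, e1, q1, w1⟩ := exists_nrm (2 * x 1 - θ * x 2)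
  obtain ⟨b2, e2, q2, w2⟩ := exists_nrm (3 * x 2 - 2 * θ * x 3)
  simp only [map_mul, map_sub, map_ofNat, conj_θ] at e0 e1 e2
  have key : 18 * (a0 + a1 + a2 + a3 - n0 - n1 - n2) = 2 * b0 + 3 * b1 + b2 + 6 * a3 := by
    apply cast_inj
    push_cast
    rw [← e0, ← e1, ← e2, ← h0, ← h1, ← h2, ← h3]
    have t0 : (n0 : O) * 3 = -θ * (x 0 * conj (x 1) - conj (x 0) * x 1) := by
      rw [m0]; linear_combination (n0 : O) * θ2
    have t1 : (n1 : O) * 3 = -θ * (x 1 * conj (x 2) - conj (x 1) * x 2) := by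
      rw [m1]; linear_combination (n1 : O) * θ2
    have t2 : (n2 : O) * 3 = -θ * (x 2 * conj (x 3) - conj (x 2) * x 3) := by
      rw [m2]; linear_combination (n2 : O) * θ2
    linear_combination (-6) * (t0 + t1 + t2) + (2 * x 1 * conj (x 1) + 3 * x 2 * conj (x 2) + 4 * x 3 * conj (x 3)) * θ2
  refine ⟨a0 + a1 + a2 + a3 - n0 - n1 - n2, ?_, by linarith, fun h => ?_⟩
  · push_cast
    rw [← h0, ← h1, ← h2, ← h3, phi]
    linear_combination m0 + m1 + m2
  · rw [h] at key
    have y3 := z3 (by linarith)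
    have u2 := w2 (by linarith)
    have u1 := w1 (by linarith)
    have u0 := w0 (by linarith)
    have y2 := nat_cancel 3 (by norm_num) (x 2) (by push_cast; linear_combination u2 + 2 * θ * y3)
    have y1 := nat_cancel 2 (by norm_num) (x 1) (by push_cast; linear_combination u1 + θ * y2)
    have y0 := nat_cancel 3 (by norm_num) (x 0) (by push_cast; linear_combination u0 + θ * y1)
    funext i
    fin_cases i <;> simp [y0, y1, y2, y3]

lemma phi_sub_smul (x y : L) (f : O) :
    phi (x - f • y) (x - f • y) = phi x x - conj f * phi x y - f * phi y x + f * conj f * phi y y := by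
  simp [phi]; ring

/-- key dichotomy -/
lemma key (x y : L) (hx : phi x x = -θ) (hy : phi y y = -θ) (f : O) (h : phi x y = -θ * f) :
    f = 0 ∨ (f * conj f = 1 ∧ x = f • y) := by
  obtain ⟨k, hk, hk0, hz⟩ := exists_nrm f
  obtain ⟨q, hq, hq0, hqz⟩ := pos (x - f • y)
  rw [phi_sub_smul, phi_skew x y, h, hx, hy] at hq
  simp only [map_mul, map_neg, conj_θ] at hq
  have h1 : q = 1 - k := by
    apply cast_inj
    have := θ_cancel ((q : O) - (1 - k : ℤ)) (by push_cast; rw [← hk]; linear_combination hq)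
    linear_combination this
  by_cases h0 : k = 0
  · exact Or.inl (hz h0)
  · right
    have hk1 : k = 1 := by omega
    refine ⟨by rw [hk, hk1]; simp, ?_⟩
    exact sub_eq_zero.mp (hqz (by omega))

abbrev V : Type := ZMod 3 × ZMod 3 × ZMod 3 × ZMod 3

def cls (x : L) : V := (red (x 0), red (x 1), red (x 2), red (x 3))

def Bf (x y : V) : ZMod 3 :=
  (x.1 * y.2.1 - x.2.1 * y.1) + (x.2.1 * y.2.2.1 - x.2.2.1 * y.2.1)
    + (x.2.2.1 * y.2.2.2 - x.2.2.2 * y.2.2.1)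

def Tf (e : ZMod 3) (t v : V) : V :=
  (v.1 + e * Bf v t * t.1, v.2.1 + e * Bf v t * t.2.1,
    v.2.2.1 + e * Bf v t * t.2.2.1, v.2.2.2 + e * Bf v t * t.2.2.2)

lemma red_phi (x y : L) : red (phi x y) = Bf (cls x) (cls y) := by
  simp [phi, red_θ, red_conj, Bf, cls]

lemma cls_eq (x y : L) (h : cls x = cls y) : ∃ z : L, x = y + θ • z := by
  simp only [cls, Prod.mk.injEq] at h
  obtain ⟨h0, h1, h2, h3⟩ := h
  have : ∀ i, ∃ b, x i - y i = θ * b := by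
    intro i
    apply red_ker
    fin_cases i <;> simp [h0, h1, h2, h3]
  choose z hz using this
  refine ⟨z, ?_⟩
  funext i
  simp only [Pi.add_apply, Pi.smul_apply, smul_eq_mul]
  linear_combination hz i

lemma int_cube (m n q : ℤ) (h : m * m + m * n + n * n = 1) (h2 : 2 - (2 * m + n) = 3 * q) :
    (m = 1 ∧ n = 0) ∨ (m = -1 ∧ n = 1) ∨ (m = 0 ∧ n = -1) := by
  have a1 : m ≤ 1 := by nlinarith [sq_nonneg (m + 2 * n)]
  have a2 : -1 ≤ m := by nlinarith [sq_nonneg (m + 2 * n)]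
  have b1 : n ≤ 1 := by nlinarith [sq_nonneg (2 * m + n)]
  have b2 : -1 ≤ n := by nlinarith [sq_nonneg (2 * m + n)]
  interval_cases m <;> interval_cases n <;> omega

lemma same_class (x y : L) (hx : phi x x = -θ) (hy : phi y y = -θ) (h : cls x = cls y) :
    ∃ f : O, x = f • y ∧ f * conj f = 1 ∧ (f = 1 ∨ f = ω - 1 ∨ f = -ω) := by
  obtain ⟨z, hz⟩ := cls_eq x y h
  obtain ⟨q, hq, -, -⟩ := pos z
  have hxy : phi x y = -θ * (1 - phi z y) := by
    rw [hz, phi_add, phi_smul, hy]; ring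
  obtain ⟨m, n, hmn⟩ := exists_rep (1 - phi z y)
  rw [hmn] at hxy
  -- 6 - 3 tr = 9 q
  have e : phi (x - (1 : O) • y) (x - (1 : O) • y) = θ * conj θ * phi z z := by
    have : x - (1 : O) • y = θ • z := by rw [hz]; simp
    rw [this, phi_smul, phi_smul']; ring
  rw [phi_sub_smul, phi_skew x y, hxy, hx, hy, hq] at e
  simp only [map_mul, map_neg, conj_θ, conj_rep, map_one] at e
  have h2 : 2 - (2 * m + n) = 3 * q := by
    apply cast_inj
    push_cast
    have := θ_cancel ((2 - (2 * m + n)) - 3 * q : O) (by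
      linear_combination -e - θ * q * θ2)
    linear_combination this
  rcases key x y hx hy _ hxy with h0 | ⟨h1, h3⟩
  · exfalso
    have k0 := nrm m n
    rw [h0] at k0
    have : m * m + m * n + n * n = 0 := by
      apply cast_inj
      rw [← k0]; simp
    have hm : m = 0 := by nlinarith [sq_nonneg (m + 2 * n), sq_nonneg m, sq_nonneg n]
    have hn : n = 0 := by nlinarith [sq_nonneg (2 * m + n), sq_nonneg m, sq_nonneg n]
    subst hm hn
    omega
  · refine ⟨_, h3, h1, ?_⟩
    rw [nrm] at h1
    have h1' : m * m + m * n + n * n = 1 := by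
      apply cast_inj; rw [h1]; simp
    rcases int_cube m n q h1' h2 with ⟨rfl, rfl⟩ | ⟨rfl, rfl⟩ | ⟨rfl, rfl⟩
    · left; simp
    · right; left; push_cast; ring
    · right; right; push_cast; ring



def trif (e : O) (t : L) : L →ₗ[O] L where
  toFun v := v + (e * phi v t) • t
  map_add' x y := by rw [phi_add]; module
  map_smul' a x := by rw [phi_smul]; simp only [RingHom.id_apply]; module

lemma trif_apply (e : O) (t v : L) : trif e t v = v + (e * phi v t) • t := rfl

lemma trif_inv (e e' : O) (t : L) (ht : phi t t = -θ) (h : e + e' - e * e' * θ = 0) (v : L) :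
    trif e t (trif e' t v) = v := by
  simp only [trif_apply, phi_add, phi_smul, ht]
  have : (e' * phi v t) + e * (phi v t + e' * phi v t * -θ) = 0 := by
    linear_combination phi v t * h
  rw [add_assoc, ← add_smul, this, zero_smul, add_zero]

def tri (e e' : O) (t : L) (ht : phi t t = -θ) (h : e + e' - e * e' * θ = 0) : L ≃ₗ[O] L :=
  LinearEquiv.ofLinearMap (trif e t) (trif e' t)
    (by exact LinearMap.ext fun v => trif_inv e e' t ht h v)
    (by exact LinearMap.ext fun v => trif_inv e' e t ht (by linear_combination h) v)

lemma tri_apply (e e' : O) (t : L) (ht h) (v : L) : tri e e' t ht h v = v + (e * phi v t) • t := rfl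

def Un (g : L ≃ₗ[O] L) : Prop := ∀ x y, phi (g x) (g y) = phi x y

lemma Un.isUnitary {g : L ≃ₗ[O] L} (h : Un g) : IsUnitary 4 g := by
  intro x y; rw [psi_eq, psi_eq, h]

lemma Un.trans {g g' : L ≃ₗ[O] L} (h : Un g) (h' : Un g') : Un (g.trans g') := by
  intro x y; simp [h' _ _, h _ _]

lemma Un.symm {g : L ≃ₗ[O] L} (h : Un g) : Un g.symm := by
  intro x y; rw [← h]; simp

lemma tri_un (e e' : O) (t : L) (ht h) (he : conj e - e - θ * e * conj e = 0) :
    Un (tri e e' t ht h) := by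
  intro v w
  simp only [tri_apply, phi_add, phi_smul, phi_add', phi_smul', ht]
  rw [phi_skew w t, map_mul]
  linear_combination (phi v t * conj (phi w t)) * he

lemma red_tri (e e' : O) (t : L) (ht h) (v : L) :
    cls (tri e e' t ht h v) = Tf (red e) (cls t) (cls v) := by
  rw [tri_apply, Tf, ← red_phi]
  simp [cls]

lemma hA : (-ω) + (1 - ω) - (-ω) * (1 - ω) * θ = 0 := by
  rw [θ_eq]; linear_combination (1 - 2 * ω) * ω2
lemma hB : (1 - ω) + (-ω) - (1 - ω) * (-ω) * θ = 0 := by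
  linear_combination hA
lemma uA : conj (-ω) - (-ω) - θ * (-ω) * conj (-ω) = 0 := by
  rw [map_neg, conj_ω, θ_eq]; linear_combination (2 * ω - 1) * ω2
lemma uB : conj (1 - ω) - (1 - ω) - θ * (1 - ω) * conj (1 - ω) = 0 := by
  rw [map_sub, map_one, conj_ω, θ_eq]; linear_combination (2 * ω - 1) * ω2

/-- for each root and each sign there is a triflection -/
lemma exists_tri (t : L) (ht : phi t t = -θ) (s : Bool) : ∃ g : L ≃ₗ[O] L, Un g ∧
    (∀ v, cls (g v) = Tf (if s then 1 else -1) (cls t) (cls v)) ∧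
    (∀ v, phi v t = 0 → g v = v) ∧ g t = (if s then ω - 1 else -ω) • t := by
  cases s
  · refine ⟨tri _ _ t ht hB, tri_un _ _ _ _ _ uB, fun v => ?_, fun v hv => ?_, ?_⟩
    · rw [red_tri, map_sub, map_one, red_ω]; rfl
    · rw [tri_apply, hv]; simp
    · rw [tri_apply, ht]
      have : -ω = 1 + (1 - ω) * -θ := by rw [θ_eq]; linear_combination (-2) * ω2
      simp only [Bool.false_eq_true, if_false]
      rw [this]; module
  · refine ⟨tri _ _ t ht hA, tri_un _ _ _ _ _ uA, fun v => ?_, fun v hv => ?_, ?_⟩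
    · rw [red_tri, map_neg, red_ω]; simp
    · rw [tri_apply, hv]; simp
    · rw [tri_apply, ht]
      have : ω - 1 = 1 + (-ω) * -θ := by rw [θ_eq]; linear_combination (-2) * ω2
      simp only [if_true]
      rw [this]; module

def ins (a : V) (l : List V) : List V := if a ∈ l then l else a :: l

lemma mem_ins {a b : V} {l : List V} (h : b ∈ ins a l) : b = a ∨ b ∈ l := by
  unfold ins at h
  split_ifs at h
  · exact Or.inr h
  · simpa using h

/-- one step of a breadth first search -/
def bstep (G : List V) (S : List V) : List V :=
  S.foldr (fun v acc => G.foldr (fun t acc => ins (Tf 1 t v) (ins (Tf (-1) t v) acc)) acc) S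

def bfs (G : List V) : ℕ → List V → List V
  | 0, S => S
  | n + 1, S => bfs G n (bstep G S)

lemma bstep_ind (G : List V) (P : V → Prop)
    (hP : ∀ t ∈ G, ∀ v, P v → P (Tf 1 t v) ∧ P (Tf (-1) t v)) (S : List V)
    (hS : ∀ v ∈ S, P v) : ∀ v ∈ bstep G S, P v := by
  have inner : ∀ (G' : List V), G' ⊆ G → ∀ (v : V), P v → ∀ acc : List V, (∀ w ∈ acc, P w) →
      ∀ w ∈ G'.foldr (fun t acc => ins (Tf 1 t v) (ins (Tf (-1) t v) acc)) acc, P w := by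
    intro G' hG v hv acc hacc
    induction G' with
    | nil => simpa using hacc
    | cons t G' ih =>
      intro w hw
      rw [List.foldr_cons] at hw
      have := hP t (hG (by simp)) v hv
      rcases mem_ins hw with rfl | hw
      · exact this.1
      rcases mem_ins hw with rfl | hw
      · exact this.2
      · exact ih (fun a ha => hG (by simp [ha])) w hw
  have outer : ∀ S' : List V, S' ⊆ S → ∀ w ∈ S'.foldr (fun v acc => G.foldr
      (fun t acc => ins (Tf 1 t v) (ins (Tf (-1) t v) acc)) acc) S, P w := by
    intro S' hS'
    induction S' with
    | nil => simpa using hS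
    | cons v S' ih =>
      exact inner G (fun a ha => ha) v (hS v (hS' (by simp))) _ (ih (fun a ha => hS' (by simp [ha])))
  exact outer S (fun a ha => ha)

lemma bfs_ind (G : List V) (P : V → Prop)
    (hP : ∀ t ∈ G, ∀ v, P v → P (Tf 1 t v) ∧ P (Tf (-1) t v)) (n : ℕ) : ∀ (S : List V),
    (∀ v ∈ S, P v) → ∀ v ∈ bfs G n S, P v := by
  induction n with
  | zero => intro S hS; exact hS
  | succ n ih => intro S hS; exact ih _ (bstep_ind G P hP S hS)

lemma check1 : ∀ v : V, v ≠ 0 →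
    v ∈ bfs [(1,0,0,0), (0,1,0,0), (0,0,1,0), (0,0,0,1)] 7 [(1,0,0,0)] := by
  decide +kernel

lemma check2 : ∀ v : V, v.2.1 = 1 →
    v ∈ bfs [(0,0,1,0), (0,0,0,1), (1,0,2,0)] 4 [(0,1,0,0)] := by
  decide +kernel

lemma check3 : ∀ v : V, v.2.1 = 2 →
    v ∈ bfs [(0,0,1,0), (0,0,0,1), (1,0,2,0)] 4 [(0,2,0,0)] := by
  decide +kernel

lemma check4' : ∀ v : V, v.2.1 = 0 →
    v ∈ [0, (1,0,0,0), (2,0,0,0)] ++ bfs [(0,0,1,0), (0,0,0,1), (1,0,2,0)] 4 [(0,0,1,0)] := by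
  decide +kernel

lemma check4 : ∀ v : V, (v.2.1 = 0 ∧ v ≠ 0 ∧ v ≠ (1,0,0,0) ∧ v ≠ (2,0,0,0)) →
    v ∈ bfs [(0,0,1,0), (0,0,0,1), (1,0,2,0)] 4 [(0,0,1,0)] := by
  rintro v ⟨h0, h1, h2, h3⟩
  have h := check4' v h0
  rw [List.mem_append] at h
  rcases h with h | h
  · simp only [List.mem_cons, List.not_mem_nil, or_false, h1, h2, h3] at h
  · exact h

lemma Tf_inv : ∀ t v : V, Tf 1 t (Tf (-1) t v) = v ∧ Tf (-1) t (Tf 1 t v) = v := by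
  have hself : ∀ t : V, Bf t t = 0 := by intro t; simp only [Bf]; ring
  have hb : ∀ (e : ZMod 3) (t v : V), Bf (Tf e t v) t = Bf v t := by
    intro e t v
    simp only [Bf, Tf]; ring
  intro t v
  constructor
  · rw [Tf, hb]; simp only [Tf]; ext <;> simp
  · rw [Tf, hb]; simp only [Tf]; ext <;> simp

/-- orbit lemma -/
lemma orbit (F : L → Prop) (G : List V) (n : ℕ) (e : V)
    (hG : ∀ t ∈ G, ∃ t' : L, cls t' = t ∧ phi t' t' = -θ ∧ ∀ y, F y → phi y t' = 0)
    (x : L) (hx : cls x ∈ bfs G n [e]) :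
    ∃ g : L ≃ₗ[O] L, Un g ∧ (∀ y, F y → g y = y) ∧ cls (g x) = e := by
  have main := bfs_ind G (fun v => ∀ x : L, cls x = v → ∃ g : L ≃ₗ[O] L, Un g ∧
    (∀ y, F y → g y = y) ∧ cls (g x) = e) ?_ n [e] ?_ _ hx
  · exact main x rfl
  · intro t ht v hv
    obtain ⟨t', h1, h2, h3⟩ := hG t ht
    constructor
    · intro x hx
      obtain ⟨g, g1, g2, g3, -⟩ := exists_tri t' h2 false
      obtain ⟨g', k1, k2, k3⟩ := hv (g x) (by
        rw [g2, hx, h1]; exact (Tf_inv t v).2)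
      refine ⟨g.trans g', g1.trans k1, fun y hy => ?_, ?_⟩
      · rw [LinearEquiv.trans_apply, g3 y (h3 y hy), k2 y hy]
      · rw [LinearEquiv.trans_apply, k3]
    · intro x hx
      obtain ⟨g, g1, g2, g3, -⟩ := exists_tri t' h2 true
      obtain ⟨g', k1, k2, k3⟩ := hv (g x) (by
        rw [g2, hx, h1]; exact (Tf_inv t v).1)
      refine ⟨g.trans g', g1.trans k1, fun y hy => ?_, ?_⟩
      · rw [LinearEquiv.trans_apply, g3 y (h3 y hy), k2 y hy]
      · rw [LinearEquiv.trans_apply, k3]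
  · intro v hv x hx
    refine ⟨LinearEquiv.refl _ _, fun _ _ => rfl, fun _ _ => rfl, ?_⟩
    simpa [hx] using hv

def b0 : L := ![1, 0, 0, 0]
def b1 : L := ![0, 1, 0, 0]
def b2 : L := ![0, 0, 1, 0]
def b3 : L := ![0, 0, 0, 1]
def b4 : L := ![1, -θ, -1, 0]

lemma c0 : cls b0 = (1,0,0,0) := by simp [cls, b0]
lemma c1 : cls b1 = (0,1,0,0) := by simp [cls, b1]
lemma c2 : cls b2 = (0,0,1,0) := by simp [cls, b2]
lemma c3 : cls b3 = (0,0,0,1) := by simp [cls, b3]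
lemma c4 : cls b4 = (1,0,2,0) := by simp [cls, b4, red_θ]; decide
lemma p0 : phi b0 b0 = -θ := by simp [phi, b0]
lemma p1 : phi b1 b1 = -θ := by simp [phi, b1]
lemma p2 : phi b2 b2 = -θ := by simp [phi, b2]
lemma p3 : phi b3 b3 = -θ := by simp [phi, b3]
lemma p4 : phi b4 b4 = -θ := by
  simp [phi, b4, conj_θ]; linear_combination θ * θ2
lemma o2 : phi b0 b2 = 0 := by simp [phi, b0, b2]
lemma o3 : phi b0 b3 = 0 := by simp [phi, b0, b3]
lemma o4 : phi b0 b4 = 0 := by simp [phi, b0, b4, conj_θ]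

lemma root_ne (x : L) (hx : phi x x = -θ) : cls x ≠ 0 := by
  intro h
  obtain ⟨z, hz⟩ := cls_eq x 0 (by rw [h]; simp [cls]; rfl)
  rw [zero_add] at hz
  obtain ⟨q, hq, -, -⟩ := pos z
  rw [hz, phi_smul, phi_smul', hq, conj_θ] at hx
  have := θ_cancel (1 - 3 * q : O) (by linear_combination hx - (θ * q) * θ2)
  have h3 : 1 - 3 * q = 0 := by
    apply cast_inj; push_cast; exact this
  omega

lemma to_b0 (x : L) (hx : phi x x = -θ) : ∃ g : L ≃ₗ[O] L, Un g ∧ g x = b0 := by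
  obtain ⟨g, h1, -, h3⟩ := orbit (fun _ => False) _ _ _ (by
    intro t ht
    simp only [List.mem_cons, List.not_mem_nil, or_false] at ht
    rcases ht with rfl | rfl | rfl | rfl
    · exact ⟨b0, c0, p0, by simp⟩
    · exact ⟨b1, c1, p1, by simp⟩
    · exact ⟨b2, c2, p2, by simp⟩
    · exact ⟨b3, c3, p3, by simp⟩) x (check1 _ (root_ne x hx))
  obtain ⟨f, hf, hn, -⟩ := same_class b0 (g x) p0 (by rw [h1, hx]) (by rw [h3, c0])
  refine ⟨g.trans (LinearEquiv.smulOfUnit ⟨f, conj f, hn, by rw [mul_comm, hn]⟩), h1.trans ?_, ?_⟩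
  · intro x y
    change phi (f • x) (f • y) = _
    rw [phi_smul, phi_smul']; linear_combination phi x y * hn
  · exact hf.symm

lemma st_orbit (n : ℕ) (e : V) (x : L)
    (hx : cls x ∈ bfs [(0,0,1,0), (0,0,0,1), (1,0,2,0)] n [e]) :
    ∃ g : L ≃ₗ[O] L, Un g ∧ g b0 = b0 ∧ cls (g x) = e := by
  obtain ⟨g, h1, h2, h3⟩ := orbit (fun y => y = b0) _ _ _ (by
    intro t ht
    simp only [List.mem_cons, List.not_mem_nil, or_false] at ht
    rcases ht with rfl | rfl | rfl
    · exact ⟨b2, c2, p2, by rintro y rfl; exact o2⟩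
    · exact ⟨b3, c3, p3, by rintro y rfl; exact o3⟩
    · exact ⟨b4, c4, p4, by rintro y rfl; exact o4⟩) x hx
  exact ⟨g, h1, h2 _ rfl, h3⟩

lemma combine (x x' : L) (hx : phi x x = -θ) (hx' : phi x' x' = -θ)
    (h : phi x b0 = phi x' b0) (g g' : L ≃ₗ[O] L) (hg : Un g) (hg' : Un g')
    (h0 : g b0 = b0) (h0' : g' b0 = b0) (hc : cls (g x) = cls (g' x')) :
    ∃ k : L ≃ₗ[O] L, Un k ∧ k b0 = b0 ∧ k x = x' := by
  have i0 : g'.symm b0 = b0 := by rw [LinearEquiv.symm_apply_eq, h0']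
  -- it suffices to map `g x` to `g' x'`
  suffices H : ∃ k : L ≃ₗ[O] L, Un k ∧ k b0 = b0 ∧ k (g x) = g' x' by
    obtain ⟨k, k1, k2, k3⟩ := H
    refine ⟨(g.trans k).trans g'.symm, (hg.trans k1).trans hg'.symm, ?_, ?_⟩
    · simp [h0, k2, i0]
    · simp [k3]
  have hy : phi (g x) (g x) = -θ := by rw [hg, hx]
  have hy' : phi (g' x') (g' x') = -θ := by rw [hg', hx']
  have e : phi (g x) b0 = phi (g' x') b0 := by
    have a := hg x b0
    have b := hg' x' b0
    rw [h0] at a; rw [h0'] at b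
    rw [a, b, h]
  obtain ⟨f, hf, -, hf3⟩ := same_class (g' x') (g x) hy' hy hc.symm
  by_cases hz : phi (g x) b0 = 0
  · have hz' : phi b0 (g x) = 0 := by rw [phi_skew (g x) b0, hz]; simp
    rcases hf3 with rfl | rfl | rfl
    · exact ⟨LinearEquiv.refl _ _, fun _ _ => rfl, rfl, by rw [hf]; simp⟩
    · obtain ⟨k, k1, -, k3, k4⟩ := exists_tri (g x) hy true
      exact ⟨k, k1, k3 _ hz', by rw [k4, hf]; simp⟩
    · obtain ⟨k, k1, -, k3, k4⟩ := exists_tri (g x) hy false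
      exact ⟨k, k1, k3 _ hz', by rw [k4, hf]; simp⟩
  · rw [hf, phi_smul] at e
    rcases mul_cancel' (1 - f) (phi (g x) b0) (by linear_combination e) with h1 | h1
    · have : f = 1 := by linear_combination -h1
      exact ⟨LinearEquiv.refl _ _, fun _ _ => rfl, rfl, by rw [hf, this]; simp⟩
    · exact absurd h1 hz

lemma not_span (x : L) (hx : phi x x = -θ) (h : phi x b0 = 0) (e : O) (he : e * conj e = 1)
    (v : V) (hv : cls (e • b0) = v) : cls x ≠ v := by
  intro hc
  have hr : phi (e • b0) (e • b0) = -θ := by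
    rw [phi_smul, phi_smul', p0]; linear_combination (-θ) * he
  obtain ⟨f, hf, -, -⟩ := same_class (e • b0) x hr hx (by rw [hc, hv])
  have : phi (e • b0) b0 = 0 := by rw [hf, phi_smul, h, mul_zero]
  rw [phi_smul, p0] at this
  have h1 := θ_cancel (1 : O) (by linear_combination (-conj e) * this - θ * he)
  have : ((1 : ℤ) : O) = (0 : ℤ) := by push_cast; exact h1
  exact absurd (cast_inj _ _ this) (by norm_num)

lemma main_b0 (x x' : L) (hx : phi x x = -θ) (hx' : phi x' x' = -θ)
    (h : phi x b0 = phi x' b0) : ∃ k : L ≃ₗ[O] L, Un k ∧ k b0 = b0 ∧ k x = x' := by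
  have hB : ∀ y : L, red (phi y b0) = - (cls y).2.1 := by
    intro y; rw [red_phi, c0]; simp [Bf]
  have hv : (cls x').2.1 = (cls x).2.1 := by
    have a := hB x
    have b := hB x'
    rw [← h, a] at b
    exact (neg_injective b).symm
  have tri3 : ∀ a : ZMod 3, a = 0 ∨ a = 1 ∨ a = 2 := by decide
  rcases tri3 (cls x).2.1 with h0 | h0 | h0
  · obtain ⟨w, hw⟩ := red_ker (phi x b0) (by rw [hB, h0, neg_zero])
    have k1 := key x b0 hx p0 (-w) (by rw [hw]; ring)
    have k2 := key x' b0 hx' p0 (-w) (by rw [← h, hw]; ring)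
    by_cases hw0 : -w = 0
    · have z : phi x b0 = 0 := by rw [hw]; linear_combination (-θ) * hw0
      have z' : phi x' b0 = 0 := by rw [← h, z]
      have aux : ∀ y : L, phi y y = -θ → phi y b0 = 0 → (cls y).2.1 = 0 →
          ∃ g : L ≃ₗ[O] L, Un g ∧ g b0 = b0 ∧ cls (g y) = (0,0,1,0) := by
        intro y hy hy0 hyc
        refine st_orbit 4 _ y (check4 _ ⟨hyc, root_ne y hy, ?_, ?_⟩)
        · exact not_span y hy hy0 1 (by simp) _ (by rw [one_smul, c0])
        · exact not_span y hy hy0 (-1) (by simp) _ (by simp [cls, b0]; decide)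
      obtain ⟨g, g1, g2, g3⟩ := aux x hx z h0
      obtain ⟨g', g1', g2', g3'⟩ := aux x' hx' z' (by rw [hv, h0])
      exact combine x x' hx hx' h g g' g1 g1' g2 g2' (by rw [g3, g3'])
    · have e1 := (k1.resolve_left hw0).2
      have e2 := (k2.resolve_left hw0).2
      exact ⟨LinearEquiv.refl _ _, fun _ _ => rfl, rfl, by rw [e1, e2]; rfl⟩
  · obtain ⟨g, g1, g2, g3⟩ := st_orbit 4 _ x (check2 _ h0)
    obtain ⟨g', g1', g2', g3'⟩ := st_orbit 4 _ x' (check2 _ (by rw [hv, h0]))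
    exact combine x x' hx hx' h g g' g1 g1' g2 g2' (by rw [g3, g3'])
  · obtain ⟨g, g1, g2, g3⟩ := st_orbit 4 _ x (check3 _ h0)
    obtain ⟨g', g1', g2', g3'⟩ := st_orbit 4 _ x' (check3 _ (by rw [hv, h0]))
    exact combine x x' hx hx' h g g' g1 g1' g2 g2' (by rw [g3, g3'])

lemma final (x₀ x x' : L) (h0 : phi x₀ x₀ = -θ) (hx : phi x x = -θ) (hx' : phi x' x' = -θ)
    (h : phi x x₀ = phi x' x₀) : ∃ k : L ≃ₗ[O] L, Un k ∧ k x₀ = x₀ ∧ k x = x' := by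
  obtain ⟨g, g1, g2⟩ := to_b0 x₀ h0
  obtain ⟨k, k1, k2, k3⟩ := main_b0 (g x) (g x') (by rw [g1, hx]) (by rw [g1, hx'])
    (by rw [← g2, g1, g1, h])
  refine ⟨(g.trans k).trans g.symm, (g1.trans k1).trans g1.symm, ?_, ?_⟩
  · simp only [LinearEquiv.trans_apply]
    rw [g2, k2, ← g2]; simp
  · simp [k3]

end St

/-- Let `x₀` be a 3-vector of `Λ⁴` and `U(Λ⁴)_{x₀}` its stabilizer.  For
every `c ∈ 𝒪`, the group `U(Λ⁴)_{x₀}` acts transitively on the set of 3-vectors `x`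
with `ψ(x, x₀) = c`. -/
theorem statement6 (x₀ : Fin 4 → O) (hx₀ : psi 4 x₀ x₀ = 3) (c : O)
    (x x' : Fin 4 → O)
    (hx : psi 4 x x = 3) (hxc : psi 4 x x₀ = c)
    (hx' : psi 4 x' x' = 3) (hxc' : psi 4 x' x₀ = c) :
    ∃ g : (Fin 4 → O) ≃ₗ[O] (Fin 4 → O), IsUnitary 4 g ∧ g x₀ = x₀ ∧ g x = x' := by
  rw [St.root_iff] at hx₀ hx hx'
  have h : St.phi x x₀ = St.phi x' x₀ := by
    rw [St.psi_eq] at hxc hxc'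
    have := St.θ_cancel (St.phi x x₀ - St.phi x' x₀) (by rw [mul_sub, hxc, hxc', sub_self])
    exact sub_eq_zero.mp this
  obtain ⟨k, k1, k2, k3⟩ := St.final x₀ x x' hx₀ hx hx' h
  exact ⟨k, k1.isUnitary, k2, k3⟩

end
end
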